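/- arXiv:2602.07514 — 4 statements merged into one kernel-verified Lean document; each statement's English description precedes it below -/
import Mathlib

section
/- Let α ∈ (0,1), β > 0, and let μ be a probability measure on ℝ that is absolutely continuous with respect to the Lebesgue measure. Then the fractional characteristic function φ_{α,β}^{(μ)}(s) = ∫_ℝ E_{α,β}(i s ξ) dμ(ξ) tends to 0 as |s| → ∞. -/
open Complex MeasureTheory

/-- The two-parameter Mittag–Leffler function `E_{α,β}(z) = ∑ zⁿ / Γ(αn + β)`. -/
noncomputable def mittagLeffler (α β : ℝ) (z : ℂ) : ℂ :=
  ∑' n : ℕ, z ^ n / (Real.Gamma (α * n + β) : ℂ)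


lemma aux_int (a b : ℝ) (ha : -1 < a) (hb : 0 < b) :
    IntegrableOn (fun t : ℝ => t ^ a * Real.exp (-b * t)) (Set.Ioi 0) := by
  have := integrableOn_rpow_mul_exp_neg_mul_rpow (s := a) (p := 1) (b := b) ha one_pos hb
  simpa using this

lemma aux_meas (a : ℝ) (r : ℂ) : AEStronglyMeasurable
    (fun t : ℝ => ((t ^ a : ℝ) : ℂ) * cexp (-(r * t))) (volume.restrict (Set.Ioi 0)) := by
  apply Measurable.aestronglyMeasurable
  fun_prop

lemma norm_aux (a : ℝ) (r : ℂ) (t : ℝ) (ht : t ∈ Set.Ioi (0:ℝ)) :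
    ‖((t ^ a : ℝ) : ℂ) * cexp (-(r * t))‖ = t ^ a * Real.exp (-r.re * t) := by
  have ht' : (0:ℝ) < t := ht
  rw [norm_mul, Complex.norm_exp, Complex.norm_of_nonneg (by positivity)]
  simp

lemma gamma_laplace_diff (a : ℝ) (ha : -1 < a) :
    DifferentiableOn ℂ (fun r : ℂ => ∫ t in Set.Ioi (0:ℝ), ((t ^ a : ℝ) : ℂ) * cexp (-(r * t)))
      {r : ℂ | 0 < r.re} := by
  intro r hr
  have hr : 0 < r.re := hr
  have hs : {w : ℂ | r.re / 2 < w.re} ∈ nhds r :=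
    (isOpen_lt continuous_const Complex.continuous_re).mem_nhds (by simp; linarith)
  have := hasDerivAt_integral_of_dominated_loc_of_deriv_le (μ := volume.restrict (Set.Ioi (0:ℝ)))
    (F := fun (w : ℂ) (t : ℝ) => ((t ^ a : ℝ) : ℂ) * cexp (-(w * t)))
    (F' := fun (w : ℂ) (t : ℝ) => ((t ^ a : ℝ) : ℂ) * (cexp (-(w * t)) * (-(t : ℂ))))
    (bound := fun t => t ^ (a + 1) * Real.exp (-(r.re/2) * t)) hs
    (Filter.Eventually.of_forall fun w => aux_meas a w)
    (by
      refine (aux_int a r.re ha hr).mono' (aux_meas a r) ?_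
      filter_upwards [ae_restrict_mem measurableSet_Ioi] with t ht
      exact (norm_aux a r t ht).le)
    (by
      apply Measurable.aestronglyMeasurable
      fun_prop)
    (by
      filter_upwards [ae_restrict_mem measurableSet_Ioi] with t ht w hw
      have ht' : (0:ℝ) < t := ht
      rw [← mul_assoc, norm_mul, norm_aux a w t ht, norm_neg, Complex.norm_of_nonneg ht'.le,
        Real.rpow_add_one ht'.ne']
      have : Real.exp (-w.re * t) ≤ Real.exp (-(r.re/2) * t) := by
        apply Real.exp_le_exp.mpr
        have : r.re/2 < w.re := hw
        nlinarith
      calc _ = t ^ a * t * Real.exp (-w.re * t) := by ring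
        _ ≤ _ := by gcongr)
    (aux_int (a+1) (r.re/2) (by linarith) (by linarith))
    (by
      refine Filter.Eventually.of_forall fun t w _ => ?_
      have : HasDerivAt (fun w : ℂ => -(w * (t:ℂ))) (-(t:ℂ)) w := by
        have h := ((hasDerivAt_id' w).mul_const (t:ℂ)).fun_neg
        rwa [one_mul] at h
      exact this.cexp.const_mul _)
  exact this.2.differentiableAt.differentiableWithinAt

lemma gamma_laplace (x : ℝ) (hx : 0 < x) (r : ℂ) (hr : 0 < r.re) :
    ∫ t in Set.Ioi (0:ℝ), ((t ^ (x - 1) : ℝ) : ℂ) * cexp (-(r * t)) =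
      r ^ (-(x : ℂ)) * Real.Gamma x := by
  have hop : IsOpen {r : ℂ | 0 < r.re} := isOpen_lt continuous_const Complex.continuous_re
  have hd := (gamma_laplace_diff (x - 1) (by linarith)).analyticOnNhd hop
  have hg : AnalyticOnNhd ℂ (fun r : ℂ => r ^ (-(x : ℂ)) * (Real.Gamma x : ℂ))
      {r : ℂ | 0 < r.re} := by
    refine DifferentiableOn.analyticOnNhd ?_ hop
    intro w hw
    refine DifferentiableAt.differentiableWithinAt ?_
    exact (DifferentiableAt.cpow_const differentiableAt_id (Or.inl hw)).mul_const _
  have hconv : IsPreconnected {r : ℂ | 0 < r.re} := (convex_halfSpace_re_gt 0).isPreconnected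
  refine hd.eqOn_of_preconnected_of_frequently_eq hg hconv (z₀ := ((1:ℝ):ℂ)) (by simp) ?_ hr
  have ht : Filter.Tendsto (fun y : ℝ => (y : ℂ)) (nhdsWithin 1 {1}ᶜ)
      (nhdsWithin ((1:ℝ):ℂ) {((1:ℝ):ℂ)}ᶜ) := by
    refine Complex.continuous_ofReal.continuousWithinAt.tendsto_nhdsWithin ?_
    intro y hy
    simpa using hy
  refine ht.frequently (Filter.Eventually.frequently ?_)
  have : ∀ᶠ y : ℝ in nhdsWithin 1 {1}ᶜ, 0 < y :=
    nhdsWithin_le_nhds (lt_mem_nhds one_pos)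
  filter_upwards [this] with y hy
  have h := Complex.integral_cpow_mul_exp_neg_mul_Ioi (a := (x:ℂ)) (r := y) (by simpa) hy
  rw [Complex.Gamma_ofReal] at h
  rw [one_div, Complex.inv_cpow _ _ (by rw [Complex.arg_ofReal_of_nonneg hy.le]; exact Real.pi_pos.ne), ← Complex.cpow_neg] at h
  rw [← h]
  refine setIntegral_congr_fun measurableSet_Ioi fun t ht => ?_
  have ht' : (0:ℝ) < t := ht
  rw [Complex.ofReal_cpow ht'.le]
  push_cast; rfl

/-- The vertical line `Re s = 1`. -/
noncomputable def lineS (v : ℝ) : ℂ := 1 + 2 * Real.pi * v * I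

lemma lineS_re (v : ℝ) : (lineS v).re = 1 := by simp [lineS]
lemma lineS_im (v : ℝ) : (lineS v).im = 2 * Real.pi * v := by simp [lineS]
lemma lineS_ne (v : ℝ) : lineS v ≠ 0 := fun h => by
  have := lineS_re v; rw [h] at this; simp at this
lemma lineS_norm (v : ℝ) : 1 ≤ ‖lineS v‖ := by
  simpa [lineS_re] using Complex.abs_re_le_norm (lineS v)
lemma lineS_cont : Continuous lineS := by unfold lineS; fun_prop
lemma lineS_slit (v : ℝ) : lineS v ∈ slitPlane := Or.inl (by rw [lineS_re]; norm_num)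
lemma lineS_cpow_cont (c : ℂ) : Continuous (fun v => lineS v ^ c) :=
  lineS_cont.cpow continuous_const lineS_slit
lemma lineS_cpow_norm (v x : ℝ) : ‖lineS v ^ (-(x:ℂ))‖ = ‖lineS v‖ ^ (-x) := by
  rw [Complex.norm_cpow_of_ne_zero (lineS_ne v)]; simp

lemma lineS_int (x : ℝ) (hx : 1 < x) : Integrable (fun v => lineS v ^ (-(x:ℂ))) := by
  have h := (integrable_rpow_neg_one_add_norm_sq (E := ℝ) (μ := volume) (r := x) (by simpa))
  refine h.mono' (lineS_cpow_cont _).aestronglyMeasurable (Filter.Eventually.of_forall fun v => ?_)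
  rw [lineS_cpow_norm]
  have h1 : ‖lineS v‖ ^ (-x) = (‖lineS v‖ ^ 2) ^ (-x/2) := by
    rw [← Real.rpow_natCast, ← Real.rpow_mul (norm_nonneg _)]
    congr 1; push_cast; ring
  rw [h1]
  apply Real.rpow_le_rpow_of_nonpos (by positivity) _ (by linarith)
  rw [Complex.sq_norm, Complex.normSq_apply, lineS_re, lineS_im, Real.norm_eq_abs, sq_abs]
  have := Real.pi_gt_three
  nlinarith [mul_nonneg (sq_nonneg v) (by nlinarith : (0:ℝ) ≤ 4 * Real.pi^2 - 1)]

lemma inv_gamma (x : ℝ) (hx : 1 < x) :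
    ∫ v : ℝ, cexp (lineS v) * lineS v ^ (-(x:ℂ)) = (Real.Gamma x : ℂ)⁻¹ := by
  let f : ℝ → ℂ := (Set.Ioi (0:ℝ)).indicator
    (fun t => ((t ^ (x - 1) : ℝ) : ℂ) * cexp (-(1 * t)))
  have hΓ : (Real.Gamma x : ℂ) ≠ 0 := by
    exact_mod_cast (Real.Gamma_pos_of_pos (by linarith)).ne'
  have hf : Integrable f := by
    refine IntegrableOn.integrable_indicator ?_ measurableSet_Ioi
    refine (aux_int (x-1) 1 (by linarith) one_pos).mono' (aux_meas _ 1) ?_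
    filter_upwards [ae_restrict_mem measurableSet_Ioi] with t ht
    simpa using (norm_aux (x-1) 1 t ht).le
  have hF : ∀ v, FourierTransform.fourier f v = lineS v ^ (-(x:ℂ)) * Real.Gamma x := by
    intro v
    rw [Real.fourier_real_eq_integral_exp_smul, ← gamma_laplace x (by linarith) (lineS v)
      (by rw [lineS_re]; norm_num), ← integral_indicator measurableSet_Ioi]
    congr 1; ext t
    by_cases ht : t ∈ Set.Ioi (0:ℝ)
    · simp only [f, Set.indicator_of_mem ht, smul_eq_mul]
      rw [mul_left_comm, ← Complex.exp_add]
      congr 2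
      simp only [lineS]; push_cast; ring
    · simp [f, Set.indicator_of_notMem ht]
  have hF' : FourierTransform.fourier f = fun v => lineS v ^ (-(x:ℂ)) * Real.Gamma x := funext hF
  have hFi : Integrable (FourierTransform.fourier f) := by
    rw [hF']; exact (lineS_int x hx).mul_const _
  have hc : ContinuousAt f 1 := by
    have : ContinuousAt (fun t : ℝ => ((t ^ (x - 1) : ℝ) : ℂ) * cexp (-(1 * t))) 1 := by
      refine ContinuousAt.mul ?_ (by fun_prop)
      exact Complex.continuous_ofReal.continuousAt.comp
        (Real.continuousAt_rpow_const 1 (x-1) (Or.inl one_ne_zero))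
    refine this.congr ?_
    filter_upwards [lt_mem_nhds (zero_lt_one (α := ℝ))] with t ht
    simp only [f]
    rw [Set.indicator_of_mem (Set.mem_Ioi.mpr ht)]
  have key := hf.fourierInv_fourier_eq hFi hc
  rw [Real.fourierInv_eq', hF'] at key
  have hf1 : f 1 = cexp (-1) := by simp [f]
  rw [hf1] at key
  have : ∫ v : ℝ, cexp (lineS v) * lineS v ^ (-(x:ℂ)) =
      cexp 1 * (∫ v : ℝ, cexp (((2 * Real.pi * inner ℝ v (1:ℝ) : ℝ) : ℂ) * I) •
        (lineS v ^ (-(x:ℂ)) * Real.Gamma x)) * (Real.Gamma x : ℂ)⁻¹ := by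
    rw [← integral_const_mul, ← integral_mul_const]
    congr 1; ext v
    have : cexp (lineS v) = cexp 1 * cexp (((2 * Real.pi * inner ℝ v (1:ℝ) : ℝ) : ℂ) * I) := by
      rw [← Complex.exp_add]; simp [lineS]
    rw [this, smul_eq_mul]
    field_simp
  rw [this, key, ← Complex.exp_add]; simp

lemma gamma_lower (x R : ℝ) (hx : 1 ≤ x) (hR : 1 ≤ R) :
    Real.exp (-(R + 1)) * R ^ (x - 1) ≤ Real.Gamma x := by
  rw [Real.Gamma_eq_integral (by linarith)]
  have hint := Real.GammaIntegral_convergent (s := x) (by linarith)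
  have hsub : Set.Ioc R (R+1) ⊆ Set.Ioi (0:ℝ) := fun t ht => lt_of_lt_of_le (by linarith) ht.1.le
  calc _ = ∫ t in Set.Ioc R (R+1), Real.exp (-(R + 1)) * R ^ (x - 1) := by simp
    _ ≤ ∫ t in Set.Ioc R (R+1), Real.exp (-t) * t ^ (x - 1) := by
      refine setIntegral_mono_on continuous_const.integrableOn_Ioc (hint.mono_set hsub) measurableSet_Ioc ?_
      intro t ht
      have h1 := ht.1
      have h2 := ht.2
      gcongr
    _ ≤ _ := by
      refine setIntegral_mono_set hint ?_ (Filter.Eventually.of_forall hsub)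
      filter_upwards [ae_restrict_mem measurableSet_Ioi] with t ht
      have : (0:ℝ) < t := ht
      simp only [Pi.zero_apply]
      positivity

lemma ml_summable (α β : ℝ) (hα : 0 < α) (hβ : 0 < β) (r : ℝ) (hr : 0 ≤ r) :
    Summable (fun n : ℕ => r ^ n / Real.Gamma (α * n + β)) := by
  let R : ℝ := (2 * r + 1) ^ (1/α)
  have hR : 1 ≤ R := Real.one_le_rpow (by linarith) (by positivity)
  have hR0 : 0 < R := by linarith
  have hRα : R ^ α = 2 * r + 1 := by
    simp only [R]
    rw [← Real.rpow_mul (by linarith), one_div_mul_cancel hα.ne', Real.rpow_one]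
  let q : ℝ := r / (2 * r + 1)
  have hq0 : 0 ≤ q := by positivity
  have hq1 : ‖q‖ < 1 := by
    rw [Real.norm_of_nonneg hq0, div_lt_one (by linarith)]; linarith
  have hs : Summable (fun n : ℕ => (α * (n ^ 1 * q ^ n) + β * q ^ n) *
      (Real.exp (R + 1) * R ^ (-β))) := by
    apply Summable.mul_right
    exact ((summable_pow_mul_geometric_of_norm_lt_one 1 hq1).mul_left α).add
      ((summable_geometric_of_norm_lt_one hq1).mul_left β)
  refine Summable.of_nonneg_of_le (fun n => ?_) (fun n => ?_) hs
  · have : 0 < Real.Gamma (α * n + β) := Real.Gamma_pos_of_pos (by positivity)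
    positivity
  · have hx : 0 < α * n + β := by positivity
    have h1 := gamma_lower (α * n + β + 1) R (by linarith) hR
    rw [Real.Gamma_add_one hx.ne', add_sub_cancel_right, Real.exp_neg] at h1
    have hΓ : 0 < Real.Gamma (α * n + β) := Real.Gamma_pos_of_pos hx
    rw [div_le_iff₀ hΓ]
    have h2 : R ^ (α * n + β) = (2 * r + 1) ^ n * R ^ β := by
      rw [Real.rpow_add hR0, Real.rpow_mul hR0.le, hRα, Real.rpow_natCast]
    rw [h2] at h1
    have h3 : r ^ n = q ^ n * Real.exp (R + 1) * R ^ (-β) *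
        ((Real.exp (R + 1))⁻¹ * ((2 * r + 1) ^ n * R ^ β)) := by
      have : 0 < R ^ β := by positivity
      rw [Real.rpow_neg hR0.le]
      simp only [q, div_pow]
      field_simp
    rw [h3]
    calc _ ≤ q ^ n * Real.exp (R + 1) * R ^ (-β) *
          ((α * n + β) * Real.Gamma (α * n + β)) := by gcongr
      _ = _ := by ring

lemma ml_diff (α β : ℝ) (hα : 0 < α) (hβ : 0 < β) : Differentiable ℂ (mittagLeffler α β) := by
  intro z
  have h := Complex.differentiableOn_tsum_of_summable_norm
    (F := fun (n : ℕ) (z : ℂ) => z ^ n / (Real.Gamma (α * n + β) : ℂ))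
    (U := Metric.ball (0:ℂ) (‖z‖ + 1))
    (ml_summable α β hα hβ (‖z‖ + 1) (by positivity)) (fun n => by fun_prop) Metric.isOpen_ball
    (fun n w hw => by
      have hΓ : 0 < Real.Gamma (α * n + β) := Real.Gamma_pos_of_pos (by positivity)
      rw [norm_div, norm_pow, Complex.norm_of_nonneg hΓ.le]
      have : ‖w‖ < ‖z‖ + 1 := by simpa using hw
      gcongr)
  exact h.differentiableAt (Metric.isOpen_ball.mem_nhds (by simp))

lemma denom_lower (α : ℝ) (hα : α ∈ Set.Ioo (0 : ℝ) 1) (z : ℂ) (v : ℝ) :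
    Real.cos (α * (Real.pi / 2)) - max z.re 0 ≤ ‖1 - z * lineS v ^ (-(α:ℂ))‖ := by
  obtain ⟨h0, h1⟩ := hα
  set q := lineS v ^ (α:ℂ) with hq
  have hqn : ‖q‖ = ‖lineS v‖ ^ α := by
    rw [hq, Complex.norm_cpow_of_ne_zero (lineS_ne v)]; simp
  have hq1 : 1 ≤ ‖q‖ := by rw [hqn]; exact Real.one_le_rpow (lineS_norm v) h0.le
  have hq0 : q ≠ 0 := norm_pos_iff.mp (by linarith)
  have hre : Real.cos (α * (Real.pi / 2)) * ‖q‖ ≤ q.re := by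
    rw [hqn, hq, Complex.cpow_ofReal_re, mul_comm]
    have harg : |(lineS v).arg| ≤ Real.pi / 2 :=
      Complex.abs_arg_le_pi_div_two_iff.mpr (by rw [lineS_re]; norm_num)
    have hpi := Real.pi_pos
    gcongr
    rw [← Real.cos_abs ((lineS v).arg * α), abs_mul, abs_of_pos h0]
    apply Real.cos_le_cos_of_nonneg_of_le_pi (by positivity) (by nlinarith)
    rw [mul_comm]; gcongr
  have e : 1 - z * lineS v ^ (-(α:ℂ)) = q⁻¹ * (q - z) := by
    rw [Complex.cpow_neg, ← hq]; field_simp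
  rw [e, norm_mul, norm_inv, inv_mul_eq_div, le_div_iff₀ (by linarith)]
  have h2 : (q - z).re ≤ ‖q - z‖ := Complex.re_le_norm _
  rw [Complex.sub_re] at h2
  have h3 := le_max_left z.re 0
  have h4 := le_max_right z.re 0
  nlinarith

/-- Integrand of the contour representation. -/
noncomputable def mlKer (α β : ℝ) (z : ℂ) (v : ℝ) : ℂ :=
  cexp (lineS v) * lineS v ^ (-((β + 1 : ℝ):ℂ)) *
    ((β - α) * (1 - z * lineS v ^ (-(α:ℂ)))⁻¹ + α * ((1 - z * lineS v ^ (-(α:ℂ)))⁻¹) ^ 2)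

lemma ker_int (β : ℝ) (hβ : 0 < β) :
    Integrable (fun v => cexp (lineS v) * lineS v ^ (-((β + 1 : ℝ):ℂ))) := by
  refine (lineS_int (β+1) (by linarith)).bdd_mul (c := Real.exp 1)
    (Complex.continuous_exp.comp lineS_cont).aestronglyMeasurable
    (Filter.Eventually.of_forall fun v => ?_)
  simp [Complex.norm_exp, lineS_re]

lemma p_le (α : ℝ) (hα : 0 < α) (v : ℝ) : ‖lineS v ^ (-(α:ℂ))‖ ≤ 1 := by
  rw [lineS_cpow_norm]
  exact Real.rpow_le_one_of_one_le_of_nonpos (lineS_norm v) (by linarith)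

lemma mlKer_meas (α β : ℝ) (z : ℂ) : AEStronglyMeasurable (mlKer α β z) := by
  apply Measurable.aestronglyMeasurable
  have h1 := (lineS_cpow_cont (-((β + 1 : ℝ):ℂ))).measurable
  have h2 := (lineS_cpow_cont (-(α:ℂ))).measurable
  have h3 := lineS_cont.measurable
  unfold mlKer
  fun_prop

lemma mlKer_bound (α β : ℝ) (z : ℂ) (v d : ℝ) (hd : 0 < d)
    (h : d ≤ ‖1 - z * lineS v ^ (-(α:ℂ))‖) :
    ‖mlKer α β z v‖ ≤ ‖cexp (lineS v) * lineS v ^ (-((β + 1 : ℝ):ℂ))‖ *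
      (|β - α| * d⁻¹ + |α| * d⁻¹ ^ 2) := by
  unfold mlKer
  rw [norm_mul]
  gcongr
  refine (norm_add_le _ _).trans ?_
  rw [norm_mul, norm_mul, norm_pow, norm_inv, ← Complex.ofReal_sub, Complex.norm_real,
    Complex.norm_real, Real.norm_eq_abs, Real.norm_eq_abs]
  gcongr

lemma mlKer_diff (α β : ℝ) (hα : α ∈ Set.Ioo (0 : ℝ) 1) (hβ : 0 < β) :
    DifferentiableOn ℂ (fun z => ∫ v, mlKer α β z v)
      {z : ℂ | z.re < Real.cos (α * (Real.pi / 2))} := by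
  intro z hz
  have hδ : 0 < Real.cos (α * (Real.pi / 2)) := by
    apply Real.cos_pos_of_mem_Ioo
    constructor <;> nlinarith [Real.pi_pos, hα.1, hα.2]
  set δ := Real.cos (α * (Real.pi / 2)) with hδdef
  have hz : z.re < δ := hz
  set m := max z.re 0 with hm
  have hmδ : m < δ := max_lt hz hδ
  let d := (δ - m) / 2
  have hd : 0 < d := by simp only [d]; linarith
  have hs : {w : ℂ | w.re < m + d} ∈ nhds z :=
    (isOpen_lt Complex.continuous_re continuous_const).mem_nhds (by
      have := le_max_left z.re 0
      change z.re < m + d; linarith)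
  have hlow : ∀ w ∈ {w : ℂ | w.re < m + d}, ∀ v, d ≤ ‖1 - w * lineS v ^ (-(α:ℂ))‖ := by
    intro w hw v
    have h := denom_lower α hα w v
    have hw : w.re < m + d := hw
    have h4 : (0:ℝ) ≤ m := le_max_right z.re 0
    have : max w.re 0 ≤ m + d := max_le hw.le (by linarith)
    have : 2 * d = δ - m := by simp only [d]; ring
    linarith
  have := hasDerivAt_integral_of_dominated_loc_of_deriv_le (μ := volume)
    (F := mlKer α β)
    (F' := fun w v => cexp (lineS v) * lineS v ^ (-((β + 1 : ℝ):ℂ)) *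
      (((β - α) * (1 - w * lineS v ^ (-(α:ℂ)))⁻¹ ^ 2 +
        2 * α * ((1 - w * lineS v ^ (-(α:ℂ)))⁻¹) ^ 3) * lineS v ^ (-(α:ℂ))))
    (bound := fun v => ‖cexp (lineS v) * lineS v ^ (-((β + 1 : ℝ):ℂ))‖ *
      ((|β - α| * d⁻¹ ^ 2 + 2 * |α| * d⁻¹ ^ 3) * 1)) hs
    (Filter.Eventually.of_forall fun w => mlKer_meas α β w)
    (by
      refine Integrable.mono' ((ker_int β hβ).norm.mul_const _) (mlKer_meas α β z)
        (Filter.Eventually.of_forall fun v => mlKer_bound α β z v d hd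
          (hlow z (mem_of_mem_nhds hs) v)))
    (by
      apply Measurable.aestronglyMeasurable
      have h1 := (lineS_cpow_cont (-((β + 1 : ℝ):ℂ))).measurable
      have h2 := (lineS_cpow_cont (-(α:ℂ))).measurable
      have h3 := lineS_cont.measurable
      fun_prop)
    (by
      refine Filter.Eventually.of_forall fun v w hw => ?_
      have hl := hlow w hw v
      rw [norm_mul]
      refine mul_le_mul_of_nonneg_left ?_ (norm_nonneg _)
      rw [norm_mul]
      refine mul_le_mul ?_ (p_le α hα.1 v) (norm_nonneg _) (by positivity)
      · refine (norm_add_le _ _).trans ?_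
        rw [norm_mul, norm_mul, norm_mul, norm_pow, norm_pow, norm_inv, ← Complex.ofReal_sub,
          Complex.norm_real, Complex.norm_real, Real.norm_eq_abs, Real.norm_eq_abs]
        simp only [Complex.norm_ofNat]
        gcongr)
    ((ker_int β hβ).norm.mul_const _)
    (by
      refine Filter.Eventually.of_forall fun v w hw => ?_
      have hl := hlow w hw v
      have hne : 1 - w * lineS v ^ (-(α:ℂ)) ≠ 0 := norm_pos_iff.mp (by linarith)
      unfold mlKer
      refine HasDerivAt.const_mul _ ?_
      have h1 : HasDerivAt (fun w : ℂ => 1 - w * lineS v ^ (-(α:ℂ))) (-lineS v ^ (-(α:ℂ))) w := by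
        have h := ((hasDerivAt_id' w).mul_const (lineS v ^ (-(α:ℂ)))).const_sub 1
        rwa [one_mul] at h
      have h2 := h1.fun_inv hne
      have h3 := (h2.const_mul ((β:ℂ) - α)).fun_add ((h2.fun_pow 2).const_mul (α:ℂ))
      refine h3.congr_deriv ?_
      rw [show 2 - 1 = 1 from rfl]
      rw [pow_one]
      push_cast
      field_simp)
  exact this.2.differentiableAt.differentiableWithinAt

lemma ml_eq_near (α β : ℝ) (hα : 0 < α) (hβ : 0 < β) (z : ℂ) (hz : ‖z‖ < 1) :
    mittagLeffler α β z = ∫ v, mlKer α β z v := by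
  let k : ℝ → ℂ := fun v => cexp (lineS v) * lineS v ^ (-((β + 1 : ℝ):ℂ))
  let p : ℝ → ℂ := fun v => lineS v ^ (-(α:ℂ))
  have hp : ∀ v, ‖p v‖ ≤ 1 := p_le α hα
  let F : ℕ → ℝ → ℂ := fun n v => ((α * n + β) * z ^ n) * (p v ^ n * k v)
  have hkp : ∀ n : ℕ, Integrable (fun v => p v ^ n * k v) := fun n => by
    refine (ker_int β hβ).bdd_mul (c := 1)
      ((lineS_cpow_cont _).pow n).aestronglyMeasurable
      (Filter.Eventually.of_forall fun v => ?_)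
    rw [norm_pow]
    exact pow_le_one₀ (norm_nonneg _) (hp v)
  have hF : ∀ n, Integrable (F n) := fun n => (hkp n).const_mul _
  have hsum : Summable fun n => ∫ v, ‖F n v‖ := by
    have hz' : ‖‖z‖‖ < 1 := by simpa
    have hs : Summable (fun n : ℕ => (α * (n ^ 1 * ‖z‖ ^ n) + β * ‖z‖ ^ n) * ∫ v, ‖k v‖) := by
      apply Summable.mul_right
      exact ((summable_pow_mul_geometric_of_norm_lt_one 1 hz').mul_left α).add
        ((summable_geometric_of_norm_lt_one hz').mul_left β)
    refine Summable.of_nonneg_of_le (fun n => integral_nonneg fun v => norm_nonneg _)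
      (fun n => ?_) hs
    rw [← integral_const_mul]
    refine integral_mono (hF n).norm ((ker_int β hβ).norm.const_mul _) fun v => ?_
    simp only [F]
    rw [norm_mul, norm_mul, norm_mul, norm_pow, norm_pow]
    have h1 : ‖(α * n + β : ℂ)‖ = α * n + β := by
      have : (α * n + β : ℂ) = ((α * n + β : ℝ) : ℂ) := by push_cast; rfl
      rw [this, Complex.norm_of_nonneg (by positivity)]
    rw [h1]
    have h2 : ‖p v‖ ^ n ≤ 1 := pow_le_one₀ (norm_nonneg _) (hp v)
    calc _ ≤ (α * n + β) * ‖z‖ ^ n * (1 * ‖k v‖) := by gcongr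
      _ = _ := by simp only [k]; ring
  have key := (hasSum_integral_of_summable_integral_norm hF hsum).tsum_eq
  have hr : ∀ v, ∑' n, F n v = mlKer α β z v := by
    intro v
    have hw : ‖z * p v‖ < 1 := by
      rw [norm_mul]
      calc _ ≤ ‖z‖ * 1 := by gcongr; exact hp v
        _ < 1 := by linarith
    have h := (((hasSum_coe_mul_geometric_of_norm_lt_one hw).mul_left (α:ℂ)).add
      ((hasSum_geometric_of_norm_lt_one hw).mul_left (β:ℂ))).mul_left (k v)
    have hne : 1 - z * p v ≠ 0 := fun h0 => by
      have : z * p v = 1 := (sub_eq_zero.mp h0).symm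
      rw [this] at hw; simp at hw
    have e1 : (fun n : ℕ => k v * ((α:ℂ) * (n * (z * p v) ^ n) + β * (z * p v) ^ n)) =
        fun n => F n v := by
      ext n; simp only [F, mul_pow]; ring
    rw [e1] at h
    rw [h.tsum_eq]
    have : mlKer α β z v = k v * ((β - α) * (1 - z * p v)⁻¹ + α * ((1 - z * p v)⁻¹) ^ 2) := rfl
    rw [this]
    field_simp
    ring
  rw [← funext hr, ← key]
  unfold mittagLeffler
  congr 1; ext n
  simp only [F]
  rw [integral_const_mul]
  have hx : 0 < α * n + β := by positivity
  have h1 := inv_gamma (α * n + β + 1) (by linarith)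
  have h2 : ∀ v, p v ^ n * k v = cexp (lineS v) * lineS v ^ (-((α * n + β + 1 : ℝ):ℂ)) := by
    intro v
    simp only [p, k]
    rw [← Complex.cpow_nat_mul, mul_left_comm, ← Complex.cpow_add _ _ (lineS_ne v)]
    congr 2
    push_cast; ring
  rw [funext h2, h1, Real.Gamma_add_one hx.ne']
  have hx' : (α * n + β : ℂ) ≠ 0 := by
    have : (α * n + β : ℂ) = ((α * n + β : ℝ) : ℂ) := by push_cast; rfl
    rw [this]; exact_mod_cast hx.ne'
  push_cast
  field_simp

lemma ml_eq (α β : ℝ) (hα : α ∈ Set.Ioo (0 : ℝ) 1) (hβ : 0 < β) (z : ℂ)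
    (hz : z.re < Real.cos (α * (Real.pi / 2))) :
    mittagLeffler α β z = ∫ v, mlKer α β z v := by
  have hδ : 0 < Real.cos (α * (Real.pi / 2)) := by
    apply Real.cos_pos_of_mem_Ioo
    constructor <;> nlinarith [Real.pi_pos, hα.1, hα.2]
  have hop : IsOpen {z : ℂ | z.re < Real.cos (α * (Real.pi / 2))} :=
    isOpen_lt Complex.continuous_re continuous_const
  refine AnalyticOnNhd.eqOn_of_preconnected_of_eventuallyEq
    ((ml_diff α β hα.1 hβ).differentiableOn.analyticOnNhd hop)
    ((mlKer_diff α β hα hβ).analyticOnNhd hop)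
    (convex_halfSpace_re_lt _).isPreconnected (z₀ := 0) (by simpa) ?_ hz
  filter_upwards [Metric.ball_mem_nhds (0:ℂ) one_pos] with w hw
  exact ml_eq_near α β hα.1 hβ w (by simpa using hw)

instance cocompact_real_cg : (Filter.cocompact ℝ).IsCountablyGenerated := by
  rw [cocompact_eq_atBot_atTop]; infer_instance

lemma ml_bound (α β : ℝ) (hα : α ∈ Set.Ioo (0 : ℝ) 1) (hβ : 0 < β) :
    (∃ C, ∀ y : ℝ, ‖mittagLeffler α β (I * y)‖ ≤ C) ∧
    Filter.Tendsto (fun y : ℝ => mittagLeffler α β (I * y)) (Filter.cocompact ℝ) (nhds 0) := by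
  have hδ : 0 < Real.cos (α * (Real.pi / 2)) := by
    apply Real.cos_pos_of_mem_Ioo
    constructor <;> nlinarith [Real.pi_pos, hα.1, hα.2]
  have heq : ∀ y : ℝ, mittagLeffler α β (I * y) = ∫ v, mlKer α β (I * y) v := fun y =>
    ml_eq α β hα hβ _ (by simpa)
  have hb : ∀ (y v : ℝ), ‖mlKer α β (I * y) v‖ ≤
      ‖cexp (lineS v) * lineS v ^ (-((β + 1 : ℝ):ℂ))‖ *
      (|β - α| * (Real.cos (α * (Real.pi / 2)))⁻¹ + |α| * (Real.cos (α * (Real.pi / 2)))⁻¹ ^ 2) :=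
    fun y v => mlKer_bound α β _ v _ hδ (by simpa using denom_lower α hα (I * y) v)
  have hbi := (ker_int β hβ).norm.mul_const
    (|β - α| * (Real.cos (α * (Real.pi / 2)))⁻¹ + |α| * (Real.cos (α * (Real.pi / 2)))⁻¹ ^ 2)
  constructor
  · exact ⟨_, fun y => (congrArg norm (heq y)).le.trans
      (norm_integral_le_of_norm_le hbi (Filter.Eventually.of_forall (hb y)))⟩
  · simp_rw [heq]
    have := tendsto_integral_filter_of_dominated_convergence (μ := volume)
      (l := Filter.cocompact ℝ) (F := fun (y : ℝ) v => mlKer α β (I * y) v) (f := fun _ => 0) _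
      (Filter.Eventually.of_forall fun y => mlKer_meas α β _)
      (Filter.Eventually.of_forall fun y => Filter.Eventually.of_forall (hb y)) hbi
      (Filter.Eventually.of_forall fun v => ?_)
    · simpa using this
    · have hp : lineS v ^ (-(α:ℂ)) ≠ 0 := by
        rw [Complex.cpow_ne_zero_iff]; exact Or.inl (lineS_ne v)
      have h1 : Filter.Tendsto (fun y : ℝ => (1 - I * y * lineS v ^ (-(α:ℂ)))⁻¹)
          (Filter.cocompact ℝ) (nhds 0) := by
        apply Filter.Tendsto.comp (Filter.tendsto_inv₀_cobounded (α := ℂ))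
        rw [← tendsto_norm_atTop_iff_cobounded]
        have h2 : Filter.Tendsto (fun y : ℝ => ‖lineS v ^ (-(α:ℂ))‖ * ‖y‖ - 1)
            (Filter.cocompact ℝ) Filter.atTop := by
          refine Filter.tendsto_atTop_add_const_right _ (-1) ?_
          exact (tendsto_norm_cocompact_atTop).const_mul_atTop (norm_pos_iff.mpr hp)
        refine Filter.tendsto_atTop_mono (fun y => ?_) h2
        have h3 := norm_sub_norm_le (I * y * lineS v ^ (-(α:ℂ))) 1
        rw [norm_sub_rev, norm_mul, norm_mul, Complex.norm_I, Complex.norm_real, norm_one,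
          one_mul, mul_comm] at h3
        exact h3
      unfold mlKer
      have h4 := ((h1.const_mul ((β:ℂ) - α)).add ((h1.pow 2).const_mul (α:ℂ))).const_mul
        (cexp (lineS v) * lineS v ^ (-((β + 1 : ℝ):ℂ)))
      simpa using h4

/-- For `α ∈ (0,1)`, `β > 0` and an absolutely continuous probability measure `μ` on `ℝ`,
the fractional characteristic function `φ_{α,β}^{(μ)}(s) = ∫ E_{α,β}(i s ξ) dμ(ξ)` tends to `0`
as `|s| → ∞`. -/
theorem fcf_tendsto_zero_of_absolutelyContinuous (α β : ℝ) (hα : α ∈ Set.Ioo (0 : ℝ) 1)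
    (hβ : 0 < β) (μ : Measure ℝ) [IsProbabilityMeasure μ] (hμ : μ ≪ volume) :
    Filter.Tendsto (fun s : ℝ => ∫ ξ : ℝ, mittagLeffler α β (Complex.I * s * ξ) ∂μ)
      (Filter.cocompact ℝ) (nhds 0) := by
  obtain ⟨⟨C, hC⟩, ht⟩ := ml_bound α β hα hβ
  have e : ∀ s ξ : ℝ, (Complex.I * s * ξ) = I * ((s * ξ : ℝ) : ℂ) := fun s ξ => by
    push_cast; ring
  have hne : ∀ᵐ ξ ∂μ, ξ ≠ 0 := hμ.ae_le (Measure.ae_ne volume 0)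
  have := tendsto_integral_filter_of_dominated_convergence (μ := μ)
      (l := Filter.cocompact ℝ) (F := fun (s : ℝ) (ξ : ℝ) => mittagLeffler α β (Complex.I * s * ξ))
      (f := fun _ => 0) (fun _ => C)
      (Filter.Eventually.of_forall fun s => Continuous.aestronglyMeasurable (by
        exact (ml_diff α β hα.1 hβ).continuous.comp (by fun_prop)))
      (Filter.Eventually.of_forall fun s => Filter.Eventually.of_forall fun ξ => by
        rw [e]; exact hC _) (integrable_const C)
      (by
        filter_upwards [hne] with ξ hξ
        simp_rw [e]
        exact ht.comp (Filter.tendsto_cocompact_mul_right₀ hξ))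
  simpa using this
end

section
/- Let α > 0 and T > 0. Then the linear span of the family of functions {t ↦ t^{αk + α − 1} : k ∈ ℕ} is dense in L^1(0,T). -/
open MeasureTheory

lemma muntz_aux_integrable (r T : ℝ) (hr : -1 < r) (hT : 0 < T) :
    Integrable (fun t : ℝ => t ^ r) (volume.restrict (Set.Ioo 0 T)) := by
  have h := (intervalIntegral.intervalIntegrable_rpow' (a := 0) (b := T) hr)
  rw [intervalIntegrable_iff_integrableOn_Ioo_of_le hT.le] at h
  exact h

lemma muntz_aux_poly (α T : ℝ) (hα : 0 < α) (hT : 0 < T) (p : Polynomial ℝ) :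
    ∃ h ∈ Submodule.span ℝ
        {f : Lp ℝ 1 (volume.restrict (Set.Ioo 0 T)) |
          ∃ k : ℕ, ∀ᵐ t ∂(volume.restrict (Set.Ioo 0 T)),
            f t = t ^ (α * k + α - 1)},
      ∀ᵐ t ∂(volume.restrict (Set.Ioo 0 T)), h t = t ^ (α - 1) * p.eval (t ^ α) := by
  induction p using Polynomial.induction_on' with
  | add p q hp hq =>
    obtain ⟨h₁, m₁, e₁⟩ := hp
    obtain ⟨h₂, m₂, e₂⟩ := hq
    refine ⟨h₁ + h₂, Submodule.add_mem _ m₁ m₂, ?_⟩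
    filter_upwards [e₁, e₂, Lp.coeFn_add h₁ h₂] with t a b c
    rw [c, Pi.add_apply, a, b, Polynomial.eval_add, mul_add]
  | monomial n a =>
    have hi : Integrable (fun t : ℝ => t ^ (α * n + α - 1)) (volume.restrict (Set.Ioo 0 T)) := by
      apply muntz_aux_integrable _ _ _ hT
      have : 0 ≤ α * n := by positivity
      linarith
    have hm := memLp_one_iff_integrable.2 hi
    refine ⟨a • hm.toLp _, Submodule.smul_mem _ _ (Submodule.subset_span ⟨n, hm.coeFn_toLp⟩), ?_⟩
    filter_upwards [hm.coeFn_toLp, Lp.coeFn_smul a (hm.toLp _),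
      ae_restrict_mem measurableSet_Ioo] with t h1 h2 h3
    rw [h2, Pi.smul_apply, h1, Polynomial.eval_monomial, smul_eq_mul, ← Real.rpow_natCast,
      ← Real.rpow_mul h3.1.le, mul_left_comm, ← Real.rpow_add h3.1]
    ring_nf

/-- Müntz-type density: for `α > 0`, the linear span of the powers `t ↦ t^{αk+α−1}`, `k ∈ ℕ`,
is dense in `L¹(0,T)`. -/
theorem muntz_density_L1 (α T : ℝ) (hα : 0 < α) (hT : 0 < T) :
    Dense ((Submodule.span ℝ
        {f : Lp ℝ 1 (volume.restrict (Set.Ioo 0 T)) |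
          ∃ k : ℕ, ∀ᵐ t ∂(volume.restrict (Set.Ioo 0 T)),
            f t = t ^ (α * k + α - 1)} : Submodule ℝ _) :
      Set (Lp ℝ 1 (volume.restrict (Set.Ioo 0 T)))) := by
  rw [Metric.dense_iff]
  set μ : Measure ℝ := volume.restrict (Set.Ioo 0 T) with hμ
  intro f ε hε
  have hw : Integrable (fun t : ℝ => t ^ (α - 1)) μ :=
    muntz_aux_integrable _ _ (by linarith) hT
  let d : ℝ → NNReal := fun t => (t ^ (α - 1)).toNNReal
  have hd : Measurable d := by fun_prop
  have hdw : ∀ᵐ t ∂μ, (d t : ℝ) = t ^ (α - 1) ∧ 0 < t ^ (α - 1) := by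
    filter_upwards [ae_restrict_mem measurableSet_Ioo] with t ht
    have := Real.rpow_pos_of_pos ht.1 (α - 1)
    exact ⟨Real.coe_toNNReal _ this.le, this⟩
  let ν : Measure ℝ := μ.withDensity (fun t => (d t : ENNReal))
  have hfin : IsFiniteMeasure ν := isFiniteMeasure_withDensity_ofReal hw.2
  have hf : Integrable (f : ℝ → ℝ) μ := L1.integrable_coeFn f
  have hg : Integrable (fun t => f t / t ^ (α - 1)) ν := by
    rw [integrable_withDensity_iff_integrable_smul hd]
    refine hf.congr ?_
    filter_upwards [hdw] with t ht
    rw [NNReal.smul_def, smul_eq_mul, ht.1]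
    field_simp [ht.2.ne']
  obtain ⟨g, hg1, hg2⟩ := hg.exists_boundedContinuous_integral_sub_le (half_pos hε)
  rw [integral_withDensity_eq_integral_smul hd] at hg1
  set W := ∫ t, t ^ (α - 1) ∂μ with hW
  have hW0 : 0 ≤ W := integral_nonneg_of_ae (by filter_upwards [hdw] with t ht using ht.2.le)
  have hδ : 0 < ε / 2 / (W + 1) := by positivity
  obtain ⟨p, hp⟩ := exists_polynomial_near_of_continuousOn 0 (T ^ α) (fun s => g (s ^ (1 / α)))
    (by
      apply Continuous.continuousOn
      exact g.continuous.comp (Real.continuous_rpow_const (by positivity))) _ hδ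
  obtain ⟨h, hm, he⟩ := muntz_aux_poly α T hα hT p
  refine ⟨h, ?_, hm⟩
  rw [Metric.mem_ball, dist_comm, dist_eq_norm, L1.norm_eq_integral_norm]
  have hi : Integrable (fun t => d t • ‖f t / t ^ (α - 1) - g t‖) μ := by
    rw [← integrable_withDensity_iff_integrable_smul hd]
    exact (hg.sub hg2).norm
  calc ∫ t, ‖(f - h : Lp ℝ 1 μ) t‖ ∂μ
      ≤ ∫ t, (d t • ‖f t / t ^ (α - 1) - g t‖ + t ^ (α - 1) * (ε / 2 / (W + 1))) ∂μ := by
        apply integral_mono_ae (L1.integrable_coeFn (f - h)).norm (hi.add (hw.mul_const _))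
        filter_upwards [he, hdw, Lp.coeFn_sub f h, ae_restrict_mem measurableSet_Ioo]
          with t h1 h2 h3 h4
        have hpt := hp (t ^ α) ⟨Real.rpow_nonneg h4.1.le _,
          Real.rpow_le_rpow h4.1.le h4.2.le hα.le⟩
        rw [← Real.rpow_mul h4.1.le, mul_one_div_cancel hα.ne', Real.rpow_one] at hpt
        simp only [Pi.add_apply]
        rw [h3, Pi.sub_apply, h1, NNReal.smul_def, smul_eq_mul, h2.1]
        have hpos := h2.2
        set w := t ^ (α - 1)
        have e : f t - w * p.eval (t ^ α)
            = w * ((f t / w - g t) - (p.eval (t ^ α) - g t)) := by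
          field_simp; ring
        rw [e, norm_mul, Real.norm_of_nonneg hpos.le, ← mul_add]
        apply mul_le_mul_of_nonneg_left _ hpos.le
        refine (norm_sub_le _ _).trans ?_
        gcongr
        exact hpt.le
    _ = (∫ t, d t • ‖f t / t ^ (α - 1) - g t‖ ∂μ) + W * (ε / 2 / (W + 1)) := by
        rw [integral_add hi (hw.mul_const _), integral_mul_const]
    _ < ε := by
        have : W * (ε / 2 / (W + 1)) < ε / 2 := by
          rw [mul_div_assoc', div_lt_iff₀ (by positivity)]
          nlinarith
        linarith
end

section
/- Let α ∈ (0, 1/2), T > 0 and δ ∈ (0,1). Then there exist constants C₁ > 0, C₂ > 0 and λ* > 0 such that for all t ∈ [δT, T] and all λ ≥ λ*, C₁ · |E_{2α,1}(−λ² t^{2α})| ≤ |E_{2α,α}(−λ² t^{2α})| ≤ C₂ · |E_{2α,1}(−λ² t^{2α})|. -/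
/-- The two-parameter Mittag–Leffler function restricted to real arguments:
`E_{α,β}(x) = ∑ xⁿ / Γ(αn + β)`. -/
noncomputable def mittagLefflerReal (α β x : ℝ) : ℝ :=
  ∑' n : ℕ, x ^ n / Real.Gamma (α * n + β)

open MeasureTheory Set Filter Topology

noncomputable def hankel (f : ℂ → ℂ) (ρ : ℝ) : ℂ :=
  (∫ u : ℝ in Ioi ρ, f (u + (Real.pi : ℝ) * Complex.I))
    - (∫ u : ℝ in Ioi ρ, f (u + ((-Real.pi : ℝ) : ℂ) * Complex.I))
    + Complex.I * ∫ θ : ℝ in Ioc (-Real.pi) Real.pi, f (ρ + θ * Complex.I)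

noncomputable def hkern (s : ℝ) (w : ℂ) : ℂ := Complex.exp (Complex.exp w + (1 - s) * w)

lemma hankel_shift (f : ℂ → ℂ) (ρ ρ' : ℝ) (h : ρ ≤ ρ')
    (hd : ∀ w : ℂ, |w.im| ≤ Real.pi → DifferentiableAt ℂ f w)
    (h1 : IntegrableOn (fun u : ℝ => f (u + (Real.pi : ℝ) * Complex.I)) (Ioi ρ))
    (h2 : IntegrableOn (fun u : ℝ => f (u + ((-Real.pi : ℝ) : ℂ) * Complex.I)) (Ioi ρ)) :
    hankel f ρ = hankel f ρ' := by
  have key := Complex.integral_boundary_rect_eq_zero_of_differentiableOn f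
    (⟨ρ, -Real.pi⟩ : ℂ) (⟨ρ', Real.pi⟩ : ℂ) (by
      intro w hw
      have h3 := hw.2
      simp only [mem_preimage, uIcc_of_le (neg_le_self Real.pi_pos.le)] at h3
      exact (hd w (abs_le.2 h3)).differentiableWithinAt)
  simp only [smul_eq_mul] at key
  have s1 := intervalIntegral.integral_interval_add_Ioi h1 (h1.mono_set (Ioi_subset_Ioi h))
  have s2 := intervalIntegral.integral_interval_add_Ioi h2 (h2.mono_set (Ioi_subset_Ioi h))
  unfold hankel
  rw [← intervalIntegral.integral_of_le (neg_le_self Real.pi_pos.le),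
    ← intervalIntegral.integral_of_le (neg_le_self Real.pi_pos.le), ← s1, ← s2]
  linear_combination -key

lemma hkern_top (s u : ℝ) : hkern s (u + (Real.pi : ℝ) * Complex.I) =
    ((Real.exp (-Real.exp u + (1 - s) * u) : ℝ) : ℂ) *
      Complex.exp ((1 - s) * Real.pi * Complex.I) := by
  unfold hkern
  rw [Complex.exp_add (u : ℂ), Complex.exp_pi_mul_I]
  push_cast
  rw [← Complex.exp_add]
  congr 1
  ring

lemma hkern_bot (s u : ℝ) : hkern s (u + ((-Real.pi : ℝ) : ℂ) * Complex.I) =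
    ((Real.exp (-Real.exp u + (1 - s) * u) : ℝ) : ℂ) *
      Complex.exp (-((1 - s) * Real.pi * Complex.I)) := by
  unfold hkern
  push_cast
  rw [Complex.exp_add (u : ℂ), neg_mul, Complex.exp_neg, Complex.exp_pi_mul_I, ← Complex.exp_add]
  congr 1
  ring

lemma tendsto_aux (c : ℝ) : Tendsto (fun u : ℝ => -Real.exp u + c * u) atTop atBot := by
  have h := (Real.isLittleO_pow_exp_atTop (n := 1)).const_mul_left c
  have h2 : ∀ᶠ u : ℝ in atTop, -Real.exp u + c * u ≤ - (1/2) * Real.exp u := by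
    filter_upwards [h.bound (show (0:ℝ) < 1/2 by norm_num)] with u hu
    simp only [pow_one, Real.norm_eq_abs, abs_of_pos (Real.exp_pos u)] at hu
    have := le_abs_self (c * u)
    linarith
  refine tendsto_atBot_mono' _ h2 ?_
  exact (Real.tendsto_exp_atTop).const_mul_atTop_of_neg (by norm_num)

lemma integrable_aux (c ρ : ℝ) :
    IntegrableOn (fun u : ℝ => Real.exp (-Real.exp u + c * u)) (Ioi ρ) := by
  refine integrable_of_isBigO_exp_neg (b := 1) one_pos (by fun_prop) ?_
  rw [Real.isBigO_exp_comp_exp_comp]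
  refine Tendsto.isBoundedUnder_le_atBot ?_
  refine (tendsto_aux (c + 1)).congr fun u => ?_
  simp only [Pi.sub_apply]
  ring

lemma hkern_int_top (s ρ : ℝ) :
    IntegrableOn (fun u : ℝ => hkern s (u + (Real.pi : ℝ) * Complex.I)) (Ioi ρ) := by
  simp only [hkern_top]
  exact (integrable_aux (1 - s) ρ).ofReal.mul_const _

lemma hkern_int_bot (s ρ : ℝ) :
    IntegrableOn (fun u : ℝ => hkern s (u + ((-Real.pi : ℝ) : ℂ) * Complex.I)) (Ioi ρ) := by
  simp only [hkern_bot]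
  exact (integrable_aux (1 - s) ρ).ofReal.mul_const _

lemma hkern_diff (s : ℝ) : Differentiable ℂ (hkern s) := by
  unfold hkern; fun_prop

lemma hkern_cont (s : ℝ) : Continuous (hkern s) := (hkern_diff s).continuous

lemma hkern_int_arc (s ρ : ℝ) :
    IntegrableOn (fun θ : ℝ => hkern s (ρ + θ * Complex.I)) (Ioc (-Real.pi) Real.pi) := by
  have : Continuous (fun θ : ℝ => hkern s (ρ + θ * Complex.I)) :=
    (hkern_cont s).comp (by fun_prop)
  exact (this.integrableOn_Icc).mono_set Ioc_subset_Icc_self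

lemma hankel_hkern_indep (s ρ ρ' : ℝ) : hankel (hkern s) ρ = hankel (hkern s) ρ' := by
  rcases le_total ρ ρ' with h | h
  · exact hankel_shift _ _ _ h (fun w _ => hkern_diff s w) (hkern_int_top s _) (hkern_int_bot s _)
  · exact (hankel_shift _ _ _ h (fun w _ => hkern_diff s w) (hkern_int_top s _)
      (hkern_int_bot s _)).symm

/-- recursion -/
lemma hankel_rec (s : ℝ) : hankel (hkern s) 0 = s * hankel (hkern (s + 1)) 0 := by
  have hder : ∀ w : ℂ, HasDerivAt (hkern (s + 1)) (hkern s w - s * hkern (s + 1) w) w := by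
    intro w
    unfold hkern
    have h1 : HasDerivAt (fun w : ℂ => Complex.exp w + (1 - ((s + 1 : ℝ) : ℂ)) * w)
        (Complex.exp w + (1 - ((s + 1 : ℝ) : ℂ)) * 1) w :=
      (Complex.hasDerivAt_exp w).add ((hasDerivAt_id w).const_mul _)
    have : Complex.exp (Complex.exp w + (1 - (s : ℂ)) * w) =
        Complex.exp (Complex.exp w + (1 - ((s + 1 : ℝ) : ℂ)) * w) * Complex.exp w := by
      rw [← Complex.exp_add]; congr 1; push_cast; ring
    have h2 := h1.cexp
    have h3 : Complex.exp (Complex.exp w + (1 - (s : ℂ)) * w) -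
        s * Complex.exp (Complex.exp w + (1 - ((s + 1 : ℝ) : ℂ)) * w) =
        Complex.exp (Complex.exp w + (1 - ((s + 1 : ℝ) : ℂ)) * w) *
          (Complex.exp w + (1 - ((s + 1 : ℝ) : ℂ)) * 1) := by
      rw [this]; push_cast; ring
    rw [h3]
    exact h2
  have hz : Tendsto (fun u : ℝ => Real.exp (-Real.exp u + (1 - (s + 1)) * u)) atTop (𝓝 0) :=
    Real.tendsto_exp_atBot.comp (tendsto_aux _)
  have hz' : Tendsto (fun u : ℝ => ((Real.exp (-Real.exp u + (1 - (s + 1)) * u) : ℝ) : ℂ))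
      atTop (𝓝 0) := by
    have := (Complex.continuous_ofReal.tendsto 0).comp hz
    rw [Complex.ofReal_zero] at this
    exact this
  have t1 : ∫ u : ℝ in Ioi (0 : ℝ), (hkern s (u + (Real.pi : ℝ) * Complex.I)
      - s * hkern (s + 1) (u + (Real.pi : ℝ) * Complex.I)) =
      0 - hkern (s + 1) (((0 : ℝ) : ℂ) + (Real.pi : ℝ) * Complex.I) := by
    refine integral_Ioi_of_hasDerivAt_of_tendsto'
      (f := fun u : ℝ => hkern (s + 1) (u + (Real.pi : ℝ) * Complex.I)) ?_ ?_ ?_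
    · intro u _
      exact HasDerivAt.comp_ofReal ((hder _).comp_add_const _ _)
    · exact (hkern_int_top s 0).sub ((hkern_int_top (s + 1) 0).const_mul _)
    · simp only [hkern_top]
      have := hz'.mul_const (Complex.exp ((1 - ((s + 1 : ℝ) : ℂ)) * Real.pi * Complex.I))
      rwa [zero_mul] at this
  have t2 : ∫ u : ℝ in Ioi (0 : ℝ), (hkern s (u + ((-Real.pi : ℝ) : ℂ) * Complex.I)
      - s * hkern (s + 1) (u + ((-Real.pi : ℝ) : ℂ) * Complex.I)) =
      0 - hkern (s + 1) (((0 : ℝ) : ℂ) + ((-Real.pi : ℝ) : ℂ) * Complex.I) := by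
    refine integral_Ioi_of_hasDerivAt_of_tendsto'
      (f := fun u : ℝ => hkern (s + 1) (u + ((-Real.pi : ℝ) : ℂ) * Complex.I)) ?_ ?_ ?_
    · intro u _
      exact HasDerivAt.comp_ofReal ((hder _).comp_add_const _ _)
    · exact (hkern_int_bot s 0).sub ((hkern_int_bot (s + 1) 0).const_mul _)
    · simp only [hkern_bot]
      have := hz'.mul_const (Complex.exp (-((1 - ((s + 1 : ℝ) : ℂ)) * Real.pi * Complex.I)))
      rwa [zero_mul] at this
  have t3 : ∫ θ : ℝ in Ioc (-Real.pi) Real.pi, ((hkern s (((0 : ℝ) : ℂ) + θ * Complex.I)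
      - s * hkern (s + 1) (((0 : ℝ) : ℂ) + θ * Complex.I)) * Complex.I) =
      hkern (s + 1) (((0 : ℝ) : ℂ) + (Real.pi : ℝ) * Complex.I) -
      hkern (s + 1) (((0 : ℝ) : ℂ) + ((-Real.pi : ℝ) : ℂ) * Complex.I) := by
    rw [← intervalIntegral.integral_of_le (neg_le_self Real.pi_pos.le)]
    refine intervalIntegral.integral_eq_sub_of_hasDerivAt
      (f := fun θ : ℝ => hkern (s + 1) (((0 : ℝ) : ℂ) + θ * Complex.I)) ?_ ?_
    · intro θ _
      have hl : HasDerivAt (fun z : ℂ => ((0 : ℝ) : ℂ) + z * Complex.I) Complex.I (θ : ℂ) := by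
        simpa using ((hasDerivAt_id (θ : ℂ)).mul_const Complex.I).const_add ((0 : ℝ) : ℂ)
      exact HasDerivAt.comp_ofReal ((hder _).comp (θ : ℂ) hl)
    · apply Continuous.intervalIntegrable
      have a1 := hkern_cont s
      have a2 := hkern_cont (s + 1)
      fun_prop
  rw [integral_sub (hkern_int_top s 0) ((hkern_int_top (s + 1) 0).const_mul _),
    integral_const_mul] at t1
  rw [integral_sub (hkern_int_bot s 0) ((hkern_int_bot (s + 1) 0).const_mul _),
    integral_const_mul] at t2
  rw [integral_mul_const, integral_sub (hkern_int_arc s 0) ((hkern_int_arc (s + 1) 0).const_mul _),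
    integral_const_mul] at t3
  unfold hankel
  linear_combination t1 - t2 + t3

/-- base case `s < 1`: integrability on the whole line and value -/
lemma gamma_line (c : ℝ) (hc : 0 < c) :
    Integrable (fun u : ℝ => Real.exp (-Real.exp u + c * u)) ∧
    ∫ u : ℝ, Real.exp (-Real.exp u + c * u) = Real.Gamma c := by
  have himg : Real.exp '' univ = Ioi 0 := by rw [image_univ, Real.range_exp]
  have e : ∀ u : ℝ, |Real.exp u| • (Real.exp (-Real.exp u) * Real.exp u ^ (c - 1)) =
      Real.exp (-Real.exp u + c * u) := by
    intro u
    rw [abs_of_pos (Real.exp_pos u), ← Real.exp_mul, smul_eq_mul, ← Real.exp_add, ← Real.exp_add]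
    congr 1; ring
  constructor
  · have h := (integrableOn_image_iff_integrableOn_abs_deriv_smul (s := univ) MeasurableSet.univ
      (fun u _ => (Real.hasDerivAt_exp u).hasDerivWithinAt) Real.exp_injective.injOn
      (fun x : ℝ => Real.exp (-x) * x ^ (c - 1))).1
      (by rw [himg]; exact Real.GammaIntegral_convergent hc)
    simp only [e, integrableOn_univ] at h
    exact h
  · have h := integral_image_eq_integral_abs_deriv_smul (s := univ) MeasurableSet.univ
      (fun u _ => (Real.hasDerivAt_exp u).hasDerivWithinAt) Real.exp_injective.injOn
      (fun x : ℝ => Real.exp (-x) * x ^ (c - 1))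
    rw [himg, ← Real.Gamma_eq_integral hc] at h
    simp only [e, setIntegral_univ] at h
    exact h.symm

lemma arc_norm (s ρ θ : ℝ) (hρ : ρ ≤ 0) :
    ‖hkern s (ρ + θ * Complex.I)‖ ≤ Real.exp (1 + (1 - s) * ρ) := by
  unfold hkern
  rw [Complex.norm_exp]
  apply Real.exp_le_exp.2
  have h1 : (Complex.exp (ρ + θ * Complex.I)).re ≤ 1 := by
    refine (Complex.re_le_norm _).trans ?_
    rw [Complex.norm_exp]
    simpa using hρ
  have h2 : ((1 - (s : ℂ)) * (ρ + θ * Complex.I)).re = (1 - s) * ρ := by simp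
  rw [Complex.add_re, h2]
  linarith

lemma hankel_base (s : ℝ) (hs : s < 1) :
    hankel (hkern s) 0 = 2 * Real.pi * Complex.I * ((1 / Real.Gamma s : ℝ) : ℂ) := by
  have hc : 0 < 1 - s := by linarith
  obtain ⟨hi, hv⟩ := gamma_line (1 - s) hc
  set G : ℂ := ((Real.Gamma (1 - s) : ℝ) : ℂ) with hG
  have hlim : Tendsto (fun ρ : ℝ => ∫ u : ℝ in Ioi ρ,
      ((Real.exp (-Real.exp u + (1 - s) * u) : ℝ) : ℂ)) atBot (𝓝 G) := by
    have h := (aecover_Ioi (μ := (volume : Measure ℝ)) (l := atBot) (a := id)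
      tendsto_id).integral_tendsto_of_countably_generated (hi.ofReal (𝕜 := ℂ))
    rw [integral_ofReal, hv] at h
    exact h
  have harc : Tendsto (fun ρ : ℝ => ∫ θ : ℝ in Ioc (-Real.pi) Real.pi,
      hkern s (ρ + θ * Complex.I)) atBot (𝓝 0) := by
    have hb : Tendsto (fun ρ : ℝ => Real.exp (1 + (1 - s) * ρ) *
        (volume : Measure ℝ).real (Ioc (-Real.pi) Real.pi)) atBot (𝓝 0) := by
      have : Tendsto (fun ρ : ℝ => 1 + (1 - s) * ρ) atBot atBot :=
        tendsto_atBot_add_const_left _ _ (tendsto_id.const_mul_atBot hc)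
      simpa using (Real.tendsto_exp_atBot.comp this).mul_const _
    refine squeeze_zero_norm' ?_ hb
    filter_upwards [eventually_le_atBot 0] with ρ hρ
    exact norm_setIntegral_le_of_norm_le_const (by simp) (fun θ _ => arc_norm s ρ θ hρ)
  have hJ : Tendsto (fun ρ : ℝ => hankel (hkern s) ρ) atBot
      (𝓝 (G * Complex.exp ((1 - s) * Real.pi * Complex.I) -
        G * Complex.exp (-((1 - s) * Real.pi * Complex.I)) + Complex.I * 0)) := by
    unfold hankel
    simp only [hkern_top, hkern_bot, integral_mul_const]
    exact ((hlim.mul_const _).sub (hlim.mul_const _)).add (harc.const_mul _)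
  have hJ2 : Tendsto (fun ρ : ℝ => hankel (hkern s) ρ) atBot (𝓝 (hankel (hkern s) 0)) := by
    refine tendsto_const_nhds.congr fun ρ => hankel_hkern_indep s 0 ρ
  rw [tendsto_nhds_unique hJ2 hJ]
  have hsin : Complex.exp ((1 - s) * Real.pi * Complex.I) -
      Complex.exp (-((1 - s) * Real.pi * Complex.I)) =
      2 * Complex.I * ((Real.sin (Real.pi * s) : ℝ) : ℂ) := by
    have h1 : Real.sin (Real.pi * s) = Real.sin ((1 - s) * Real.pi) := by
      rw [← Real.sin_pi_sub]; congr 1; ring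
    rw [h1, Complex.ofReal_sin, Complex.sin]
    push_cast
    rw [neg_mul]
    linear_combination (-(Complex.exp (-((1 - s) * Real.pi * Complex.I)) -
      Complex.exp ((1 - s) * Real.pi * Complex.I))) * Complex.I_mul_I
  have hr : Real.Gamma (1 - s) * Real.sin (Real.pi * s) = Real.pi * (1 / Real.Gamma s) := by
    have h := Real.Gamma_mul_Gamma_one_sub s
    have hp := Real.Gamma_pos_of_pos hc
    by_cases h0 : Real.sin (Real.pi * s) = 0
    · rw [h0, div_zero] at h
      rcases mul_eq_zero.1 h with h | h
      · rw [h0, h]; simp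
      · exact absurd h hp.ne'
    · have hs0 : Real.Gamma s ≠ 0 := by
        intro h'
        rw [h', zero_mul] at h
        exact (div_ne_zero Real.pi_ne_zero h0) h.symm
      rw [eq_div_iff h0] at h
      rw [mul_one_div, eq_div_iff hs0]
      linarith
  have hr' : G * ((Real.sin (Real.pi * s) : ℝ) : ℂ) =
      Real.pi * ((1 / Real.Gamma s : ℝ) : ℂ) := by rw [hG]; exact_mod_cast hr
  linear_combination G * hsin + 2 * Complex.I * hr'

lemma hankel_one : hankel (hkern 1) 0 = 2 * Real.pi * Complex.I := by
  have h2 : ∀ ρ : ℝ, hankel (hkern 1) ρ = Complex.I * ∫ θ : ℝ in Ioc (-Real.pi) Real.pi,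
      hkern 1 (ρ + θ * Complex.I) := by
    intro ρ
    unfold hankel
    simp only [hkern_top, hkern_bot]
    simp
  rw [h2]
  have harc : Tendsto (fun ρ : ℝ => ∫ θ : ℝ in Ioc (-Real.pi) Real.pi,
      hkern 1 (ρ + θ * Complex.I)) atBot (𝓝 (∫ θ : ℝ in Ioc (-Real.pi) Real.pi, (1 : ℂ))) := by
    refine tendsto_integral_filter_of_dominated_convergence (fun _ => Real.exp (1 + (1 - 1) * 0))
      ?_ ?_ ?_ ?_
    · exact Eventually.of_forall fun ρ => (hkern_int_arc 1 ρ).aestronglyMeasurable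
    · filter_upwards [eventually_le_atBot 0] with ρ hρ
      refine Eventually.of_forall fun θ => (arc_norm 1 ρ θ hρ).trans (by simp)
    · exact integrable_const _
    · refine Eventually.of_forall fun θ => ?_
      unfold hkern
      have h3 : Tendsto (fun ρ : ℝ => Complex.exp (ρ + θ * Complex.I)) atBot (𝓝 0) := by
        rw [tendsto_zero_iff_norm_tendsto_zero]
        simp only [Complex.norm_exp]
        simpa using Real.tendsto_exp_atBot
      have := (Complex.continuous_exp.tendsto 0).comp h3
      simpa [Function.comp_def] using this
  have h4 : Tendsto (fun ρ : ℝ => hankel (hkern 1) ρ) atBot (𝓝 (hankel (hkern 1) 0)) := by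
    refine tendsto_const_nhds.congr fun ρ => hankel_hkern_indep 1 0 ρ
  have h5 : Tendsto (fun ρ : ℝ => hankel (hkern 1) ρ) atBot
     (𝓝 (Complex.I * ∫ θ : ℝ in Ioc (-Real.pi) Real.pi, (1 : ℂ))) := by
    simp only [h2]
    exact harc.const_mul _
  rw [← h2, tendsto_nhds_unique h4 h5]
  have hp := Real.pi_pos
  simp [Measure.real, hp.le]
  ring

lemma hankel_eq (s ρ : ℝ) :
    hankel (hkern s) ρ = 2 * Real.pi * Complex.I * ((1 / Real.Gamma s : ℝ) : ℂ) := by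
  rw [hankel_hkern_indep s ρ 0]
  have main : ∀ n : ℕ, ∀ s : ℝ, s ≤ n + 1 →
      hankel (hkern s) 0 = 2 * Real.pi * Complex.I * ((1 / Real.Gamma s : ℝ) : ℂ) := by
    intro n
    induction n with
    | zero =>
      intro s hs
      rcases (show s ≤ 1 by simpa using hs).lt_or_eq with h | h
      · exact hankel_base s h
      · rw [h, hankel_one]; simp
    | succ n ih =>
      intro s hs
      by_cases h : s ≤ 1
      · exact ih s (h.trans (by simp))
      · push Not at h
        have h1 := ih (s - 1) (by push_cast at hs; linarith)
        have h2 := hankel_rec (s - 1)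
        have h3 : s - 1 ≠ 0 := by linarith
        have h4 := Real.Gamma_add_one h3
        rw [sub_add_cancel] at h2 h4
        rw [h1] at h2
        have h5 : ((s - 1 : ℝ) : ℂ) ≠ 0 := by exact_mod_cast h3
        apply mul_left_cancel₀ h5
        rw [← h2, h4]
        push_cast at h5 ⊢
        field_simp
  obtain ⟨n, hn⟩ := exists_nat_ge s
  exact main n s (by linarith)

noncomputable def mlk (a b x : ℝ) (w : ℂ) : ℂ :=
  hkern (b - a) w / (Complex.exp (a * w) + x)

lemma denom_bound (a : ℝ) (ha : 0 < a) (ha1 : a < 1) : ∃ c > 0, ∀ x : ℝ, 0 < x → ∀ w : ℂ,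
    |w.im| ≤ Real.pi → c * x ≤ ‖Complex.exp (a * w) + x‖ := by
  have hpi := Real.pi_pos
  have hcos : -1 < Real.cos (a * Real.pi) := by
    rw [← Real.cos_pi]
    exact Real.cos_lt_cos_of_nonneg_of_le_pi (by positivity) le_rfl (by nlinarith)
  have hcos1 := Real.cos_le_one (a * Real.pi)
  set m := (1 + Real.cos (a * Real.pi)) / 2 with hm
  have hm0 : 0 < m := by rw [hm]; linarith
  have hm1 : m ≤ 1 := by rw [hm]; linarith
  refine ⟨Real.sqrt m, Real.sqrt_pos.2 hm0, fun x hx w hw => ?_⟩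
  set r := Real.exp (a * w.re) with hr
  have hr0 : 0 < r := Real.exp_pos _
  have hre : (Complex.exp (a * w)).re = r * Real.cos (a * w.im) := by
    rw [Complex.exp_re]; simp [hr]
  have him : (Complex.exp (a * w)).im = r * Real.sin (a * w.im) := by
    rw [Complex.exp_im]; simp [hr]
  have hc : Real.cos (a * Real.pi) ≤ Real.cos (a * w.im) := by
    rw [← Real.cos_abs (a * w.im), abs_mul, abs_of_pos ha]
    exact Real.cos_le_cos_of_nonneg_of_le_pi (by positivity) (by nlinarith)
      (by gcongr)
  have hsq : ‖Complex.exp (a * w) + x‖ ^ 2 = r ^ 2 + 2 * r * x * Real.cos (a * w.im) + x ^ 2 := by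
    rw [Complex.sq_norm, Complex.normSq_apply]
    simp only [Complex.add_re, Complex.add_im, Complex.ofReal_re, Complex.ofReal_im, hre, him]
    linear_combination r ^ 2 * Real.sin_sq_add_cos_sq (a * w.im)
  refine le_trans (le_abs_self _) (abs_le_of_sq_le_sq ?_ (norm_nonneg _))
  rw [hsq, mul_pow, Real.sq_sqrt hm0.le]
  have h1 : 2 * r * x * Real.cos (a * Real.pi) ≤ 2 * r * x * Real.cos (a * w.im) := by gcongr
  have h2 : Real.cos (a * Real.pi) = 2 * m - 1 := by rw [hm]; ring
  rw [h2] at h1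
  have h3 : 0 ≤ (1 - m) * (r - x) ^ 2 := mul_nonneg (by linarith) (sq_nonneg _)
  have h4 : 0 ≤ m * (r * x) := by positivity
  have h5 : 0 ≤ m * r ^ 2 := by positivity
  nlinarith

lemma denom_ne (a : ℝ) (ha : 0 < a) (ha1 : a < 1) (x : ℝ) (hx : 0 < x) (w : ℂ)
    (hw : |w.im| ≤ Real.pi) : Complex.exp (a * w) + x ≠ 0 := by
  obtain ⟨c, hc, h⟩ := denom_bound a ha ha1
  have := h x hx w hw
  intro h0
  rw [h0, norm_zero] at this
  have : 0 < c * x := by positivity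
  linarith

lemma term_eq (a b x : ℝ) (n : ℕ) (w : ℂ) :
    (-(x : ℂ)) ^ n * hkern (a * n + b) w = hkern b w * (-(x * Complex.exp (-(a * w)))) ^ n := by
  have : hkern (a * n + b) w = hkern b w * Complex.exp (-(a * w)) ^ n := by
    unfold hkern
    rw [← Complex.exp_nat_mul, ← Complex.exp_add]
    congr 1
    push_cast
    ring
  rw [this, neg_pow (x : ℂ), neg_pow (_ * _), mul_pow]
  ring

lemma ratio_norm (a x ρ : ℝ) (ha : 0 < a) (hx : 0 < x) (hρ : x ≤ Real.exp (a * ρ) / 2) (w : ℂ)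
    (hw : ρ ≤ w.re) : ‖-(x * Complex.exp (-(a * w)))‖ ≤ 1 / 2 := by
  rw [norm_neg, norm_mul, Complex.norm_exp, Complex.norm_real, Real.norm_of_nonneg hx.le]
  have h1 : (-(a * w) : ℂ).re = -(a * w.re) := by simp
  rw [h1, Real.exp_neg]
  have h2 : Real.exp (a * ρ) ≤ Real.exp (a * w.re) := by gcongr
  have h3 := Real.exp_pos (a * w.re)
  rw [← div_eq_mul_inv, div_le_iff₀ h3]
  linarith

lemma piece_sum (a b x ρ : ℝ) (ha : 0 < a) (hx : 0 < x)
    (hρ : x ≤ Real.exp (a * ρ) / 2) (μ : Measure ℝ) (γ : ℝ → ℂ) (hγ : Continuous γ)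
    (hre : ∀ᵐ u ∂μ, ρ ≤ (γ u).re) (hint : Integrable (fun u => hkern b (γ u)) μ) :
    HasSum (fun n : ℕ => (-(x : ℂ)) ^ n * ∫ u, hkern (a * n + b) (γ u) ∂μ)
      (∫ u, mlk a b x (γ u) ∂μ) := by
  simp only [← integral_const_mul]
  refine hasSum_integral_of_dominated_convergence
    (fun n u => ‖hkern b (γ u)‖ * (1 / 2 : ℝ) ^ n) ?_ ?_ ?_ ?_ ?_
  · intro n
    have := hkern_cont (a * n + b)
    exact Continuous.aestronglyMeasurable (by fun_prop)
  · intro n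
    filter_upwards [hre] with u hu
    rw [term_eq, norm_mul, norm_pow]
    gcongr
    exact ratio_norm a x ρ ha hx hρ _ hu
  · exact Eventually.of_forall fun u => (summable_geometric_two).mul_left _
  · simp only [tsum_mul_left]
    exact hint.norm.mul_const _
  · filter_upwards [hre] with u hu
    simp only [term_eq]
    have hn := ratio_norm a x ρ ha hx hρ _ hu
    have h := (hasSum_geometric_of_norm_lt_one (lt_of_le_of_lt hn (by norm_num))).mul_left
      (hkern b (γ u))
    have h1 : hkern (b - a) (γ u) = hkern b (γ u) * Complex.exp (a * γ u) := by
      unfold hkern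
      rw [← Complex.exp_add]
      congr 1
      push_cast
      ring
    have h2 : Complex.exp (a * γ u) + x =
        Complex.exp (a * γ u) * (1 - -(x * Complex.exp (-(a * γ u)))) := by
      rw [Complex.exp_neg]
      field_simp [Complex.exp_ne_zero]
      ring
    have h3 : mlk a b x (γ u) =
        hkern b (γ u) * (1 - -(x * Complex.exp (-(a * γ u))))⁻¹ := by
      unfold mlk
      rw [h1, h2, div_eq_mul_inv, mul_inv]
      field_simp [Complex.exp_ne_zero]
    rw [h3]
    exact h

lemma piece_int (a b x : ℝ) (ha : 0 < a) (ha1 : a < 1) (hx : 0 < x) (μ : Measure ℝ) (γ : ℝ → ℂ)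
    (hγ : Continuous γ) (him : ∀ u, |(γ u).im| ≤ Real.pi)
    (hint : Integrable (fun u => hkern (b - a) (γ u)) μ) :
    Integrable (fun u => mlk a b x (γ u)) μ := by
  obtain ⟨c, hc, h⟩ := denom_bound a ha ha1
  have hcont : Continuous (fun u => mlk a b x (γ u)) := by
    have := hkern_cont (b - a)
    unfold mlk
    exact Continuous.div (by fun_prop) (by fun_prop) fun u => denom_ne a ha ha1 x hx _ (him u)
  refine (hint.norm.mul_const ((c * x)⁻¹)).mono' hcont.aestronglyMeasurable ?_
  refine Eventually.of_forall fun u => ?_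
  unfold mlk
  rw [norm_div, ← div_eq_mul_inv]
  have := h x hx _ (him u)
  gcongr

lemma piece_lim (a b : ℝ) (ha : 0 < a) (ha1 : a < 1) (μ : Measure ℝ) (γ : ℝ → ℂ)
    (hγ : Continuous γ) (him : ∀ᵐ u ∂μ, |(γ u).im| ≤ Real.pi)
    (hint : Integrable (fun u => hkern (b - a) (γ u)) μ) :
    Tendsto (fun x : ℝ => (x : ℂ) * ∫ u, mlk a b x (γ u) ∂μ) atTop
      (𝓝 (∫ u, hkern (b - a) (γ u) ∂μ)) := by
  obtain ⟨c, hc, h⟩ := denom_bound a ha ha1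
  simp only [← integral_const_mul]
  refine tendsto_integral_filter_of_dominated_convergence
    (fun u => ‖hkern (b - a) (γ u)‖ * c⁻¹) ?_ ?_ ?_ ?_
  · refine Eventually.of_forall fun x => ?_
    have h1 : AEStronglyMeasurable (fun u => Complex.exp (a * γ u) + x) μ :=
      Continuous.aestronglyMeasurable (by fun_prop)
    exact (hint.aestronglyMeasurable.div₀ h1).const_mul _
  · filter_upwards [eventually_gt_atTop 0] with x hx
    filter_upwards [him] with u hu
    have h1 := h x hx _ hu
    unfold mlk
    rw [norm_mul, norm_div, Complex.norm_real, Real.norm_of_nonneg hx.le]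
    have h2 : 0 < c * x := by positivity
    calc x * (‖hkern (b - a) (γ u)‖ / ‖Complex.exp (a * γ u) + x‖)
        ≤ x * (‖hkern (b - a) (γ u)‖ / (c * x)) := by gcongr
      _ = _ := by field_simp
  · exact hint.norm.mul_const _
  · filter_upwards [him] with u hu
    have h1 : Tendsto (fun x : ℝ => Complex.exp (a * γ u) * ((x⁻¹ : ℝ) : ℂ) + 1) atTop
        (𝓝 (Complex.exp (a * γ u) * ((0 : ℝ) : ℂ) + 1)) :=
      (((Complex.continuous_ofReal.tendsto 0).comp tendsto_inv_atTop_zero).const_mul _).add_const _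
    rw [Complex.ofReal_zero, mul_zero, zero_add] at h1
    have h2 := (h1.inv₀ one_ne_zero).const_mul (hkern (b - a) (γ u))
    rw [inv_one, mul_one] at h2
    refine h2.congr' ?_
    filter_upwards [eventually_gt_atTop 0] with x hx
    have hne := denom_ne a ha ha1 x hx _ hu
    have hx' : (x : ℂ) ≠ 0 := by exact_mod_cast hx.ne'
    unfold mlk
    push_cast
    have h3 : Complex.exp (a * γ u) * (x : ℂ)⁻¹ + 1 = (Complex.exp (a * γ u) + x) / x := by
      field_simp
    rw [h3, inv_div]
    ring

lemma ml_eq_hankel (a b x : ℝ) (ha : 0 < a) (ha1 : a < 1) (hx : 0 < x) :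
    2 * Real.pi * Complex.I * ((mittagLefflerReal a b (-x) : ℝ) : ℂ) = hankel (mlk a b x) 0 := by
  obtain ⟨ρ, hρ0, hρ⟩ : ∃ ρ : ℝ, 0 ≤ ρ ∧ x ≤ Real.exp (a * ρ) / 2 := by
    have h1 : Tendsto (fun ρ : ℝ => Real.exp (a * ρ)) atTop atTop :=
      Real.tendsto_exp_atTop.comp (tendsto_id.const_mul_atTop ha)
    obtain ⟨ρ, h2, h3⟩ := ((h1.eventually_ge_atTop (2 * x)).and (eventually_ge_atTop 0)).exists
    exact ⟨ρ, h3, by linarith⟩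
  have g1 : Continuous fun u : ℝ => (u : ℂ) + (Real.pi : ℝ) * Complex.I := by fun_prop
  have g2 : Continuous fun u : ℝ => (u : ℂ) + ((-Real.pi : ℝ) : ℂ) * Complex.I := by fun_prop
  have g3 : Continuous fun θ : ℝ => (ρ : ℂ) + θ * Complex.I := by fun_prop
  have p1 := piece_sum a b x ρ ha hx hρ (volume.restrict (Ioi ρ)) _ g1
    (by filter_upwards [ae_restrict_mem measurableSet_Ioi] with u hu; simpa using hu.le)
    (hkern_int_top b ρ)
  have p2 := piece_sum a b x ρ ha hx hρ (volume.restrict (Ioi ρ)) _ g2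
    (by filter_upwards [ae_restrict_mem measurableSet_Ioi] with u hu; simpa using hu.le)
    (hkern_int_bot b ρ)
  have p3 := piece_sum a b x ρ ha hx hρ (volume.restrict (Ioc (-Real.pi) Real.pi)) _ g3
    (by simp) (hkern_int_arc b ρ)
  have p := (p1.sub p2).add (p3.mul_left Complex.I)
  have hsum : HasSum (fun n : ℕ => 2 * Real.pi * Complex.I *
      (((-x) ^ n / Real.Gamma (a * n + b) : ℝ) : ℂ)) (hankel (mlk a b x) ρ) := by
    refine p.congr_fun ?_
    intro n
    have := hankel_eq (a * n + b) ρ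
    unfold hankel at this
    push_cast at this ⊢
    linear_combination (-((-(x : ℂ)) ^ n)) * this
  have hshift : hankel (mlk a b x) 0 = hankel (mlk a b x) ρ := by
    refine hankel_shift _ _ _ hρ0 ?_ ?_ ?_
    · intro w hw
      unfold mlk
      exact (hkern_diff _ w).div (by fun_prop) (denom_ne a ha ha1 x hx w hw)
    · exact piece_int a b x ha ha1 hx _ _ g1 (by simp [abs_of_pos Real.pi_pos])
        (hkern_int_top _ 0)
    · exact piece_int a b x ha ha1 hx _ _ g2 (by simp [abs_of_pos Real.pi_pos])
        (hkern_int_bot _ 0)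
  rw [hshift, ← hsum.tsum_eq, tsum_mul_left, mittagLefflerReal, Complex.ofReal_tsum]

lemma ml_tendsto (a b : ℝ) (ha : 0 < a) (ha1 : a < 1) :
    Tendsto (fun x : ℝ => x * mittagLefflerReal a b (-x)) atTop
      (𝓝 (1 / Real.Gamma (b - a))) := by
  have g1 : Continuous fun u : ℝ => (u : ℂ) + (Real.pi : ℝ) * Complex.I := by fun_prop
  have g2 : Continuous fun u : ℝ => (u : ℂ) + ((-Real.pi : ℝ) : ℂ) * Complex.I := by fun_prop
  have g3 : Continuous fun θ : ℝ => ((0 : ℝ) : ℂ) + θ * Complex.I := by fun_prop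
  have p1 := piece_lim a b ha ha1 (volume.restrict (Ioi 0)) _ g1
    (by simp [abs_of_pos Real.pi_pos]) (hkern_int_top _ 0)
  have p2 := piece_lim a b ha ha1 (volume.restrict (Ioi 0)) _ g2
    (by simp [abs_of_pos Real.pi_pos]) (hkern_int_bot _ 0)
  have p3 := piece_lim a b ha ha1 (volume.restrict (Ioc (-Real.pi) Real.pi)) _ g3
    (by filter_upwards [ae_restrict_mem measurableSet_Ioc] with u hu
        simpa using abs_le.2 ⟨hu.1.le, hu.2⟩) (hkern_int_arc _ 0)
  have p := (p1.sub p2).add (p3.const_mul Complex.I)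
  change Tendsto _ _ (𝓝 (hankel (hkern (b - a)) 0)) at p
  rw [hankel_eq] at p
  have hpi : (2 * Real.pi * Complex.I : ℂ) ≠ 0 := Complex.two_pi_I_ne_zero
  have q := p.const_mul (2 * Real.pi * Complex.I : ℂ)⁻¹
  rw [inv_mul_cancel_left₀ hpi] at q
  have q2 := (Complex.continuous_re.tendsto _).comp q
  rw [Complex.ofReal_re] at q2
  refine q2.congr' ?_
  filter_upwards [eventually_gt_atTop 0] with x hx
  have e := ml_eq_hankel a b x ha ha1 hx
  have : (2 * Real.pi * Complex.I : ℂ)⁻¹ * ((x : ℂ) * hankel (mlk a b x) 0) =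
      ((x * mittagLefflerReal a b (-x) : ℝ) : ℂ) := by
    rw [← e]; push_cast; field_simp
  rw [← Complex.ofReal_re (x * mittagLefflerReal a b (-x)), ← this]
  simp only [Function.comp]
  congr 2
  unfold hankel
  ring

theorem mittagLeffler_comparison_estimate (α T δ : ℝ) (hα : α ∈ Set.Ioo (0 : ℝ) (1 / 2))
    (hT : 0 < T) (hδ : δ ∈ Set.Ioo (0 : ℝ) 1) :
    ∃ C₁ > 0, ∃ C₂ > 0, ∃ lamStar > 0, ∀ t lam : ℝ,
      t ∈ Set.Icc (δ * T) T → lamStar ≤ lam →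
      C₁ * |mittagLefflerReal (2 * α) 1 (-(lam ^ 2) * t ^ (2 * α))| ≤
          |mittagLefflerReal (2 * α) α (-(lam ^ 2) * t ^ (2 * α))| ∧
        |mittagLefflerReal (2 * α) α (-(lam ^ 2) * t ^ (2 * α))| ≤
          C₂ * |mittagLefflerReal (2 * α) 1 (-(lam ^ 2) * t ^ (2 * α))| := by
  obtain ⟨hα0, hα1⟩ := hα
  obtain ⟨hδ0, hδ1⟩ := hδ
  have l1 := (ml_tendsto (2 * α) 1 (by linarith) (by linarith)).abs
  have l2 := (ml_tendsto (2 * α) α (by linarith) (by linarith)).abs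
  have n1 : Real.Gamma (1 - 2 * α) ≠ 0 := (Real.Gamma_pos_of_pos (by linarith)).ne'
  have n2 : Real.Gamma (α - 2 * α) ≠ 0 := by
    intro h
    have h1 := Real.Gamma_add_one (s := α - 2 * α) (by linarith)
    rw [h, mul_zero] at h1
    exact (Real.Gamma_pos_of_pos (show 0 < α - 2 * α + 1 by linarith)).ne' h1
  set L1 := |1 / Real.Gamma (1 - 2 * α)| with hL1
  set L2 := |1 / Real.Gamma (α - 2 * α)| with hL2
  have p1 : 0 < L1 := abs_pos.2 (one_div_ne_zero n1)
  have p2 : 0 < L2 := abs_pos.2 (one_div_ne_zero n2)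
  have ev := (((l1.eventually_const_lt (show L1 / 2 < L1 by linarith)).and
    (l1.eventually_lt_const (show L1 < 2 * L1 by linarith))).and
    ((l2.eventually_const_lt (show L2 / 2 < L2 by linarith)).and
    (l2.eventually_lt_const (show L2 < 2 * L2 by linarith)))).and (eventually_gt_atTop 0)
  obtain ⟨X, hX⟩ := eventually_atTop.1 ev
  have hD : 0 < (δ * T) ^ (2 * α) := Real.rpow_pos_of_pos (by positivity) _
  refine ⟨L2 / (4 * L1), by positivity, 4 * L2 / L1, by positivity,
    max 1 (X / (δ * T) ^ (2 * α)), by positivity, fun t lam ht hlam => ?_⟩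
  have hlam1 : 1 ≤ lam := (le_max_left _ _).trans hlam
  have hlam2 : X / (δ * T) ^ (2 * α) ≤ lam := (le_max_right _ _).trans hlam
  have htD : (δ * T) ^ (2 * α) ≤ t ^ (2 * α) :=
    Real.rpow_le_rpow (by positivity) ht.1 (by linarith)
  have hx : X ≤ lam ^ 2 * t ^ (2 * α) := by
    rw [div_le_iff₀ hD] at hlam2
    have h1 : lam ≤ lam ^ 2 := by nlinarith
    calc X ≤ lam * (δ * T) ^ (2 * α) := hlam2
      _ ≤ lam ^ 2 * t ^ (2 * α) := by gcongr
  obtain ⟨⟨⟨a1, a2⟩, a3, a4⟩, a5⟩ := hX _ hx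
  rw [neg_mul]
  set x := lam ^ 2 * t ^ (2 * α)
  rw [abs_mul, abs_of_pos a5] at a1 a2 a3 a4
  set e1 := |mittagLefflerReal (2 * α) 1 (-x)|
  set e2 := |mittagLefflerReal (2 * α) α (-x)|
  constructor
  · refine le_of_mul_le_mul_left ?_ a5
    calc x * (L2 / (4 * L1) * e1) = L2 / (4 * L1) * (x * e1) := by ring
      _ ≤ L2 / (4 * L1) * (2 * L1) := by gcongr
      _ = L2 / 2 := by field_simp; ring
      _ ≤ x * e2 := a3.le
  · refine le_of_mul_le_mul_left ?_ a5
    calc x * e2 ≤ 2 * L2 := a4.le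
      _ = 4 * L2 / L1 * (L1 / 2) := by field_simp; ring
      _ ≤ 4 * L2 / L1 * (x * e1) := by gcongr
      _ = x * (4 * L2 / L1 * e1) := by ring
end

section
/- Let α ∈ (0, 1/2). Then lim_{x → +∞} E_{2α,α}(−x) / E_{2α,1}(−x) = Γ(1 − 2α) / Γ(−α); in particular this limit is a negative real number. -/
open Complex MeasureTheory Filter Set Topology

namespace MLProof

/-- The half Hankel functional in logarithmic coordinates. -/
noncomputable def K (c : ℝ) (φ : ℂ → ℂ) : ℝ :=
  (I * (∫ θ in (0 : ℝ)..Real.pi, φ (c + θ * I)) + ∫ t in Ioi c, φ (t + Real.pi * I)).im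

/-- Integrability along the half Hankel contour. -/
def Good (c : ℝ) (φ : ℂ → ℂ) : Prop :=
  IntervalIntegrable (fun θ : ℝ => φ (c + θ * I)) volume 0 Real.pi ∧
    IntegrableOn (fun t : ℝ => φ (t + Real.pi * I)) (Ioi c)

/-- The Hankel integrand. -/
noncomputable def ps (z : ℝ) (w : ℂ) : ℂ := exp (exp w + w * (1 - z))

lemma Good.add {c : ℝ} {f g : ℂ → ℂ} (hf : Good c f) (hg : Good c g) :
    Good c (fun w => f w + g w) := ⟨hf.1.add hg.1, hf.2.add hg.2⟩

lemma Good.smul {c : ℝ} {f : ℂ → ℂ} (hf : Good c f) (r : ℝ) :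
    Good c (fun w => (r : ℂ) * f w) := ⟨hf.1.const_mul _, hf.2.const_mul _⟩

lemma K_add {c : ℝ} {f g : ℂ → ℂ} (hf : Good c f) (hg : Good c g) :
    K c (fun w => f w + g w) = K c f + K c g := by
  unfold K
  rw [intervalIntegral.integral_add hf.1 hg.1, integral_add hf.2 hg.2, ← add_im]
  congr 1
  ring

lemma K_smul {c : ℝ} (f : ℂ → ℂ) (r : ℝ) :
    K c (fun w => (r : ℂ) * f w) = r * K c f := by
  unfold K
  rw [intervalIntegral.integral_const_mul, integral_const_mul, ← im_ofReal_mul]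
  congr 1
  ring

lemma K_sum {c : ℝ} {f : ℕ → ℂ → ℂ} (hf : ∀ n, Good c (f n)) (s : Finset ℕ) :
    Good c (fun w => ∑ n ∈ s, f n w) ∧
    K c (fun w => ∑ n ∈ s, f n w) = ∑ n ∈ s, K c (f n) := by
  classical
  induction s using Finset.induction_on with
  | empty => simp [K, Good]
  | insert a s ha ih =>
    simp only [Finset.sum_insert ha]
    exact ⟨(hf a).add ih.1, by rw [K_add (hf a) ih.1, ih.2]⟩

lemma norm_ps_top (z t : ℝ) :
    ‖ps z (t + Real.pi * I)‖ = Real.exp (-Real.exp t + t * (1 - z)) := by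
  unfold ps
  rw [norm_exp, Complex.exp_add, exp_pi_mul_I]
  congr 1
  simp [← ofReal_exp]

lemma ps_top (z t : ℝ) :
    ps z (t + Real.pi * I) =
      (Real.exp (-Real.exp t + t * (1 - z)) : ℝ) * exp (Real.pi * (1 - z) * I) := by
  unfold ps
  rw [Complex.exp_add t, exp_pi_mul_I]
  push_cast
  rw [← Complex.exp_add]
  congr 1
  ring

lemma bigO_aux (k : ℝ) :
    (fun t : ℝ => Real.exp (-Real.exp t + t * k)) =O[atTop] fun t => Real.exp (-1 * t) := by
  apply Asymptotics.IsBigO.of_bound 1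
  filter_upwards [eventually_ge_atTop (2 * (k + 1)), eventually_ge_atTop 0] with t ht ht0
  rw [Real.norm_of_nonneg (Real.exp_pos _).le, Real.norm_of_nonneg (Real.exp_pos _).le, one_mul]
  apply Real.exp_le_exp.mpr
  have := Real.quadratic_le_exp_of_nonneg ht0
  nlinarith

lemma integrable_aux (k c : ℝ) :
    IntegrableOn (fun t : ℝ => Real.exp (-Real.exp t + t * k)) (Ioi c) :=
  integrable_of_isBigO_exp_neg one_pos (by fun_prop) (bigO_aux k)

lemma differentiable_ps (z : ℝ) : Differentiable ℂ (ps z) := by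
  unfold ps; fun_prop

lemma continuous_ps (z : ℝ) : Continuous (ps z) := (differentiable_ps z).continuous

lemma good_ps (z c : ℝ) : Good c (ps z) := by
  constructor
  · apply Continuous.intervalIntegrable
    exact (continuous_ps z).comp (by fun_prop)
  · simp_rw [ps_top]
    exact (integrable_aux (1 - z) c).ofReal.mul_const _

/-- the closed half strip -/
def D (c : ℝ) : Set ℂ := {w | c ≤ w.re ∧ 0 ≤ w.im ∧ w.im ≤ Real.pi}

lemma mem_D_left {c θ : ℝ} (h0 : 0 ≤ θ) (h1 : θ ≤ Real.pi) : (c + θ * I : ℂ) ∈ D c := by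
  simp [D, h0, h1]

lemma mem_D_top {c t : ℝ} (h0 : c ≤ t) : (t + Real.pi * I : ℂ) ∈ D c := by
  simp [D, h0, Real.pi_pos.le]

lemma good_of_bound {c z C : ℝ} {f : ℂ → ℂ} (hf : ContinuousOn f (D c))
    (hb : ∀ w ∈ D c, ‖f w‖ ≤ C * ‖ps z w‖) : Good c f := by
  constructor
  · apply ContinuousOn.intervalIntegrable
    apply hf.comp (by fun_prop)
    intro θ hθ
    rw [uIcc_of_le Real.pi_pos.le] at hθ
    exact mem_D_left hθ.1 hθ.2
  · refine Integrable.mono' ((good_ps z c).2.norm.const_mul C) ?_ ?_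
    · apply ContinuousOn.aestronglyMeasurable _ measurableSet_Ioi
      exact hf.comp (by fun_prop) fun t ht => mem_D_top (le_of_lt ht)
    · filter_upwards [ae_restrict_mem measurableSet_Ioi] with t ht
      exact hb _ (mem_D_top (le_of_lt ht))

lemma K_tendsto {ι : Type*} {l : Filter ι} [l.IsCountablyGenerated] {c z C : ℝ}
    {f : ι → ℂ → ℂ} {g : ℂ → ℂ}
    (hf : ∀ᶠ i in l, ContinuousOn (f i) (D c))
    (hb : ∀ᶠ i in l, ∀ w ∈ D c, ‖f i w‖ ≤ C * ‖ps z w‖)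
    (hl : ∀ w ∈ D c, Tendsto (fun i => f i w) l (𝓝 (g w))) :
    Tendsto (fun i => K c (f i)) l (𝓝 (K c g)) := by
  unfold K
  refine (Complex.continuous_im.tendsto _).comp (Tendsto.add (Tendsto.const_mul _ ?_) ?_)
  · apply intervalIntegral.tendsto_integral_filter_of_dominated_convergence
      (fun θ => C * ‖ps z (c + θ * I)‖)
    · filter_upwards [hf, hb] with i hi hi'
      have := (good_of_bound hi hi').1
      rw [intervalIntegrable_iff] at this
      exact this.aestronglyMeasurable
    · filter_upwards [hb] with i hi
      filter_upwards with θ hθ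
      rw [uIoc_of_le Real.pi_pos.le] at hθ
      exact hi _ (mem_D_left hθ.1.le hθ.2)
    · exact (good_ps z c).1.norm.const_mul C
    · filter_upwards with θ hθ
      rw [uIoc_of_le Real.pi_pos.le] at hθ
      exact hl _ (mem_D_left hθ.1.le hθ.2)
  · apply tendsto_integral_filter_of_dominated_convergence
      (fun t : ℝ => C * ‖ps z (t + Real.pi * I)‖)
    · filter_upwards [hf, hb] with i hi hi'
      exact (good_of_bound hi hi').2.aestronglyMeasurable
    · filter_upwards [hb] with i hi
      filter_upwards [ae_restrict_mem measurableSet_Ioi] with t ht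
      exact hi _ (mem_D_top (le_of_lt ht))
    · exact (good_ps z c).2.norm.const_mul C
    · filter_upwards [ae_restrict_mem measurableSet_Ioi] with t ht
      exact hl _ (mem_D_top (le_of_lt ht))

/-- Shifting the contour. -/
lemma K_shift {c d : ℝ} (hcd : c ≤ d) {f : ℂ → ℂ} (hf : DifferentiableOn ℂ f (D c))
    (hr : ∀ t : ℝ, (f t).im = 0)
    (hg : IntegrableOn (fun t : ℝ => f (t + Real.pi * I)) (Ioi c)) : K c f = K d f := by
  have h := integral_boundary_rect_eq_zero_of_differentiableOn f (c : ℂ) (d + Real.pi * I) (by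
    apply hf.mono
    intro w hw
    rw [mem_reProdIm] at hw
    simp only [ofReal_re, ofReal_im, add_re, add_im, mul_re, mul_im, I_re, I_im] at hw
    simp only [mul_zero, mul_one, sub_zero, add_zero, zero_add] at hw
    rw [uIcc_of_le hcd, uIcc_of_le Real.pi_pos.le] at hw
    exact ⟨hw.1.1, hw.2.1, hw.2.2⟩)
  simp only [ofReal_re, ofReal_im, add_re, add_im, mul_re, mul_im, I_re, I_im] at h
  simp only [mul_zero, mul_one, zero_mul, sub_zero, add_zero, zero_add, ofReal_zero,
    smul_eq_mul] at h
  have hbot : (∫ x : ℝ in c..d, f x).im = 0 := by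
    have : (∫ x : ℝ in c..d, f x) = ∫ x : ℝ in c..d, (((f x).re : ℝ) : ℂ) := by
      congr 1; ext x
      apply Complex.ext <;> simp [hr]
    rw [this, intervalIntegral.integral_ofReal, ofReal_im]
  have htop : (∫ t in Ioi c, f (t + Real.pi * I)) =
      (∫ t in c..d, f (t + Real.pi * I)) + ∫ t in Ioi d, f (t + Real.pi * I) := by
    rw [intervalIntegral.integral_of_le hcd, ← setIntegral_union, Ioc_union_Ioi_eq_Ioi hcd]
    · exact Ioc_disjoint_Ioi le_rfl
    · exact measurableSet_Ioi
    · exact hg.mono_set Ioc_subset_Ioi_self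
    · exact hg.mono_set (Ioi_subset_Ioi hcd)
  unfold K
  rw [htop]
  have h2 := congrArg Complex.im h
  simp only [add_im, sub_im, hbot, Complex.zero_im] at h2 ⊢
  linarith

lemma ps_real (z t : ℝ) : (ps z t).im = 0 := by
  have : ps z t = (Real.exp (Real.exp t + t * (1 - z)) : ℝ) := by
    unfold ps; push_cast; rfl
  rw [this, ofReal_im]

lemma K_ps_shift (z c d : ℝ) (hcd : c ≤ d) : K c (ps z) = K d (ps z) :=
  K_shift hcd (differentiable_ps z).differentiableOn (ps_real z) (good_ps z c).2

lemma integral_gamma {s : ℝ} (hs : 0 < s) :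
    Integrable (fun t : ℝ => Real.exp (-Real.exp t + t * s)) ∧
    ∫ t : ℝ, Real.exp (-Real.exp t + t * s) = Real.Gamma s := by
  have him : Real.exp '' univ = Ioi 0 := by rw [image_univ, Real.range_exp]
  have hfun : ∀ t : ℝ, |Real.exp t| • (Real.exp (-Real.exp t) * (Real.exp t) ^ (s - 1)) =
      Real.exp (-Real.exp t + t * s) := by
    intro t
    rw [abs_of_pos (Real.exp_pos _), ← Real.exp_mul, smul_eq_mul, ← Real.exp_add, ← Real.exp_add]
    congr 1
    ring
  have h1 := integral_image_eq_integral_abs_deriv_smul (s := univ) (f := Real.exp)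
    (f' := Real.exp) MeasurableSet.univ (fun x _ => (Real.hasDerivAt_exp x).hasDerivWithinAt)
    Real.exp_injective.injOn (fun x => Real.exp (-x) * x ^ (s - 1))
  have h2 := integrableOn_image_iff_integrableOn_abs_deriv_smul (s := univ) (f := Real.exp)
    (f' := Real.exp) MeasurableSet.univ (fun x _ => (Real.hasDerivAt_exp x).hasDerivWithinAt)
    Real.exp_injective.injOn (fun x => Real.exp (-x) * x ^ (s - 1))
  rw [him] at h1 h2
  simp only [hfun, setIntegral_univ, integrableOn_univ] at h1 h2
  exact ⟨h2.mp (Real.GammaIntegral_convergent hs), by rw [← h1, Real.Gamma_eq_integral hs]⟩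

lemma norm_ps_left_le {z c θ : ℝ} : ‖ps z (c + θ * I)‖ ≤ Real.exp (Real.exp c + c * (1 - z)) := by
  unfold ps
  rw [norm_exp]
  apply Real.exp_le_exp.mpr
  rw [add_re]
  have h1 : (exp (c + θ * I)).re ≤ Real.exp c := by
    refine (re_le_norm _).trans ?_
    rw [norm_exp]; simp
  have h2 : ((c + θ * I : ℂ) * (1 - z)).re = c * (1 - z) := by simp
  rw [h2]; linarith

lemma hankel_base {z : ℝ} (hz : z < 1) (c : ℝ) : K c (ps z) = Real.pi * (Real.Gamma z)⁻¹ := by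
  have hs : 0 < 1 - z := by linarith
  obtain ⟨hi, hG⟩ := integral_gamma hs
  have hlim : Tendsto (fun d => K d (ps z)) atBot
      (𝓝 ((I * 0 + (Real.Gamma (1 - z) : ℂ) * exp (Real.pi * (1 - z) * I)).im)) := by
    unfold K
    refine (Complex.continuous_im.tendsto _).comp (Tendsto.add (Tendsto.const_mul _ ?_) ?_)
    · apply squeeze_zero_norm'
        (a := fun d => Real.exp (1 + d * (1 - z)) * |Real.pi - 0|)
      · filter_upwards [eventually_le_atBot 0] with d hd
        apply intervalIntegral.norm_integral_le_of_norm_le_const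
        intro θ _
        refine norm_ps_left_le.trans (Real.exp_le_exp.mpr ?_)
        have := Real.exp_le_one_iff.mpr hd
        linarith
      · have : Tendsto (fun d : ℝ => 1 + d * (1 - z)) atBot atBot :=
          tendsto_atBot_add_const_left _ _ (tendsto_id.atBot_mul_const hs)
        simpa using (Real.tendsto_exp_atBot.comp this).mul_const |Real.pi - 0|
    · simp_rw [ps_top, integral_mul_const, integral_complex_ofReal]
      apply Tendsto.mul_const
      apply (Complex.continuous_ofReal.tendsto _).comp
      rw [← hG]
      exact (aecover_Ioi tendsto_id).integral_tendsto_of_countably_generated hi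
  have hconst : Tendsto (fun d => K d (ps z)) atBot (𝓝 (K c (ps z))) := by
    apply tendsto_const_nhds.congr'
    filter_upwards [eventually_le_atBot c] with d hd
    exact (K_ps_shift z d c hd).symm
  rw [tendsto_nhds_unique hconst hlim, mul_zero, zero_add, im_ofReal_mul]
  have : (exp (Real.pi * (1 - z) * I)).im = Real.sin (Real.pi * z) := by
    have e : (Real.pi * (1 - z) * I : ℂ) = ((Real.pi * (1 - z) : ℝ) : ℂ) * I := by push_cast; rfl
    rw [e, exp_ofReal_mul_I_im, mul_sub, mul_one, Real.sin_pi_sub]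
  rw [this]
  have hrefl := Real.Gamma_mul_Gamma_one_sub z
  have hpos := Real.Gamma_pos_of_pos hs
  by_cases h0 : Real.sin (Real.pi * z) = 0
  · rw [h0, div_zero] at hrefl
    have : Real.Gamma z = 0 := by
      rcases mul_eq_zero.mp hrefl with h | h
      · exact h
      · exact absurd h hpos.ne'
    simp [h0, this]
  · have hne : Real.Gamma z ≠ 0 := by
      intro h
      rw [h, zero_mul] at hrefl
      exact (div_ne_zero Real.pi_ne_zero h0) hrefl.symm
    rw [eq_div_iff h0] at hrefl
    rw [← div_eq_mul_inv, eq_div_iff hne]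
    linarith

lemma hankel_one (c : ℝ) : K c (ps 1) = Real.pi := by
  have hlim : Tendsto (fun d => K d (ps 1)) atBot
      (𝓝 ((I * (∫ θ in (0 : ℝ)..Real.pi, (1 : ℂ))).im)) := by
    have hK : ∀ d, K d (ps 1) = (I * (∫ θ in (0 : ℝ)..Real.pi, ps 1 (d + θ * I))).im := by
      intro d
      unfold K
      have : (∫ t in Ioi d, ps 1 (t + Real.pi * I)).im = 0 := by
        simp_rw [ps_top]
        simp only [ofReal_one, sub_self, mul_zero, zero_mul, Complex.exp_zero, mul_one]
        rw [integral_complex_ofReal, ofReal_im]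
      rw [add_im, this, add_zero]
    simp_rw [hK]
    refine (Complex.continuous_im.tendsto _).comp (Tendsto.const_mul _ ?_)
    apply intervalIntegral.tendsto_integral_filter_of_dominated_convergence
      (fun θ => Real.exp 1)
    · filter_upwards with d
      exact ((continuous_ps 1).comp (by fun_prop)).aestronglyMeasurable
    · filter_upwards [eventually_le_atBot 0] with d hd
      filter_upwards with θ _
      refine norm_ps_left_le.trans (Real.exp_le_exp.mpr ?_)
      have := Real.exp_le_one_iff.mpr hd
      linarith
    · simp
    · filter_upwards with θ _
      unfold ps
      simp only [ofReal_one, sub_self, mul_zero, add_zero]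
      rw [← Complex.exp_zero]
      apply (Complex.continuous_exp.tendsto _).comp
      apply squeeze_zero_norm (a := fun d : ℝ => Real.exp d) _ Real.tendsto_exp_atBot
      intro d
      rw [norm_exp]; simp
  have hconst : Tendsto (fun d => K d (ps 1)) atBot (𝓝 (K c (ps 1))) := by
    apply tendsto_const_nhds.congr'
    filter_upwards [eventually_le_atBot c] with d hd
    exact (K_ps_shift 1 d c hd).symm
  rw [tendsto_nhds_unique hconst hlim]
  simp

lemma hankel_rec (z c : ℝ) : K c (ps z) = z * K c (ps (z + 1)) := by
  have hd : ∀ w : ℂ, HasDerivAt (ps (z + 1)) (ps z w + ((-z : ℝ) : ℂ) * ps (z + 1) w) w := by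
    intro w
    unfold ps
    have h := ((Complex.hasDerivAt_exp w).add ((hasDerivAt_id w).mul_const
      (1 - ((z + 1 : ℝ) : ℂ)))).cexp
    refine h.congr_deriv ?_
    have e : exp (exp w + w * (1 - (z : ℂ))) =
        exp (exp w + w * (1 - ((z + 1 : ℝ) : ℂ))) * exp w := by
      rw [← Complex.exp_add]; congr 1; push_cast; ring
    rw [e]
    simp only [Pi.add_apply, id]
    push_cast
    ring
  have hgood : Good c (fun w => ps z w + ((-z : ℝ) : ℂ) * ps (z + 1) w) :=
    (good_ps z c).add ((good_ps (z + 1) c).smul (-z))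
  have h1 : K c (fun w => ps z w + ((-z : ℝ) : ℂ) * ps (z + 1) w) = 0 := by
    unfold K
    have hl : (I * ∫ θ in (0 : ℝ)..Real.pi, (fun w => ps z w + ((-z : ℝ) : ℂ) * ps (z + 1) w)
        (c + θ * I)) = ps (z + 1) (c + Real.pi * I) - ps (z + 1) c := by
      rw [← intervalIntegral.integral_const_mul]
      have := intervalIntegral.integral_eq_sub_of_hasDerivAt (a := 0) (b := Real.pi)
        (f := fun θ : ℝ => ps (z + 1) (c + θ * I))
        (f' := fun θ : ℝ => I * (ps z (c + θ * I) + ((-z : ℝ) : ℂ) * ps (z + 1) (c + θ * I)))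
        (by
          intro θ _
          have hin : HasDerivAt (fun θ : ℝ => (c + θ * I : ℂ)) I θ := by
            have := (((hasDerivAt_id (θ : ℂ)).mul_const I).const_add (c : ℂ)).comp_ofReal
            simpa using this
          have := (hd (c + θ * I)).comp θ hin
          refine this.congr_deriv ?_
          ring) (hgood.1.const_mul I)
      rw [this]; simp
    have ht : (∫ t in Ioi c, (fun w => ps z w + ((-z : ℝ) : ℂ) * ps (z + 1) w)
        (t + Real.pi * I)) = 0 - ps (z + 1) (c + Real.pi * I) := by
      apply integral_Ioi_of_hasDerivAt_of_tendsto'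
        (f := fun t : ℝ => ps (z + 1) (t + Real.pi * I))
      · intro t _
        have hin : HasDerivAt (fun t : ℝ => (t + Real.pi * I : ℂ)) 1 t := by
          have := ((hasDerivAt_id (t : ℂ)).add_const (Real.pi * I)).comp_ofReal
          simpa using this
        have := (hd (t + Real.pi * I)).comp t hin
        refine this.congr_deriv ?_
        ring
      · exact hgood.2
      · rw [tendsto_zero_iff_norm_tendsto_zero]
        simp_rw [norm_ps_top]
        refine (bigO_aux _).trans_tendsto ?_
        simpa using Real.tendsto_exp_neg_atTop_nhds_zero
    rw [hl, ht]
    have := ps_real (z + 1) c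
    simp [this]
  rw [K_add (good_ps z c) ((good_ps (z + 1) c).smul (-z)), K_smul] at h1
  linarith

lemma hankel (z c : ℝ) : K c (ps z) = Real.pi * (Real.Gamma z)⁻¹ := by
  have key : ∀ n : ℕ, ∀ z : ℝ, z < n + 1 → K c (ps z) = Real.pi * (Real.Gamma z)⁻¹ := by
    intro n
    induction n with
    | zero => intro z hz; exact hankel_base (by simpa using hz) c
    | succ n ih =>
      intro z hz
      by_cases h1 : z = 1
      · rw [h1, hankel_one]; simp
      · have hr := hankel_rec (z - 1) c
        rw [ih (z - 1) (by push_cast at hz; linarith), sub_add_cancel] at hr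
        have hne : z - 1 ≠ 0 := sub_ne_zero.mpr h1
        have hg := Real.Gamma_add_one hne
        rw [sub_add_cancel] at hg
        rw [hg, mul_inv]
        apply mul_left_cancel₀ hne
        rw [← hr]
        field_simp
  obtain ⟨n, hn⟩ := exists_nat_gt z
  exact key n z (by linarith)

/-- The denominators stay away from zero. -/
lemma denom_bound {a x c : ℝ} (ha0 : 0 < a) (ha1 : a < 1) (hx : 0 < x) {w : ℂ} (hw : w ∈ D c) :
    (Real.exp (a * w.re) + x) * Real.cos (a * Real.pi / 2) ≤ ‖exp (a * w) + x‖ := by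
  obtain ⟨-, h0, h1⟩ := hw
  have hpi := Real.pi_pos
  have hmono : Real.cos (a * Real.pi / 2) ≤ Real.cos (a * w.im / 2) := by
    apply Real.cos_le_cos_of_nonneg_of_le_pi
    · positivity
    · nlinarith
    · nlinarith
  have hn : ‖exp (a * w) + x‖ = ‖exp (((-(a * w.im / 2) : ℝ) : ℂ) * I) * (exp (a * w) + x)‖ := by
    rw [norm_mul, norm_exp_ofReal_mul_I, one_mul]
  rw [hn]
  refine le_trans ?_ (re_le_norm _)
  have hre : (exp (((-(a * w.im / 2) : ℝ) : ℂ) * I) * (exp (a * w) + x)).re =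
      (Real.exp (a * w.re) + x) * Real.cos (a * w.im / 2) := by
    rw [mul_add, ← Complex.exp_add, add_re, exp_re, re_mul_ofReal, exp_ofReal_mul_I_re]
    have e1 : (((-(a * w.im / 2) : ℝ) : ℂ) * I + a * w).re = a * w.re := by simp
    have e2 : (((-(a * w.im / 2) : ℝ) : ℂ) * I + a * w).im = a * w.im / 2 := by
      simp; ring
    rw [e1, e2, Real.cos_neg]; ring
  rw [hre]
  have := Real.exp_pos (a * w.re)
  gcongr

lemma cos_pos {a : ℝ} (ha0 : 0 < a) (ha1 : a < 1) : 0 < Real.cos (a * Real.pi / 2) := by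
  have hpi := Real.pi_pos
  apply Real.cos_pos_of_mem_Ioo
  constructor <;> nlinarith

lemma denom_ne {a x c : ℝ} (ha0 : 0 < a) (ha1 : a < 1) (hx : 0 < x) {w : ℂ} (hw : w ∈ D c) :
    exp (a * w) + x ≠ 0 := by
  rw [← norm_pos_iff]
  have := denom_bound ha0 ha1 hx hw
  have h2 := cos_pos ha0 ha1
  have := Real.exp_pos (a * w.re)
  refine lt_of_lt_of_le ?_ (denom_bound ha0 ha1 hx hw)
  positivity

/-- The Mittag-Leffler integrand. -/
noncomputable def ph (a β x : ℝ) (w : ℂ) : ℂ := ps β w * (exp (a * w) / (exp (a * w) + x))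

lemma norm_exp_mul (a : ℝ) (w : ℂ) : ‖exp (a * w)‖ = Real.exp (a * w.re) := by
  rw [norm_exp]; simp

lemma ph_diff {a β x c : ℝ} (ha0 : 0 < a) (ha1 : a < 1) (hx : 0 < x) :
    DifferentiableOn ℂ (ph a β x) (D c) := by
  unfold ph
  apply (differentiable_ps β).differentiableOn.mul
  apply DifferentiableOn.div
  · fun_prop
  · fun_prop
  · intro w hw; exact denom_ne ha0 ha1 hx hw

lemma ph_bound {a β x c : ℝ} (ha0 : 0 < a) (ha1 : a < 1) (hx : 0 < x) {w : ℂ} (hw : w ∈ D c) :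
    ‖ph a β x w‖ ≤ (Real.cos (a * Real.pi / 2))⁻¹ * ‖ps β w‖ := by
  unfold ph
  rw [norm_mul, mul_comm]
  gcongr
  have hc := cos_pos ha0 ha1
  have hb := denom_bound ha0 ha1 hx hw
  have hpos := norm_pos_iff.mpr (denom_ne ha0 ha1 hx hw)
  rw [norm_div, norm_exp_mul, div_le_iff₀ hpos, inv_mul_eq_div, le_div_iff₀ hc]
  refine le_trans ?_ hb
  gcongr
  linarith

lemma ph_good {a β x c : ℝ} (ha0 : 0 < a) (ha1 : a < 1) (hx : 0 < x) : Good c (ph a β x) :=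
  good_of_bound (ph_diff ha0 ha1 hx).continuousOn fun _ hw => ph_bound ha0 ha1 hx hw

lemma ph_real (a β x t : ℝ) : (ph a β x t).im = 0 := by
  have : ph a β x t = ((Real.exp (Real.exp t + t * (1 - β)) *
      (Real.exp (a * t) / (Real.exp (a * t) + x)) : ℝ) : ℂ) := by
    unfold ph ps; push_cast; rfl
  rw [this, ofReal_im]

lemma ml_eq {a β x : ℝ} (ha0 : 0 < a) (ha1 : a < 1) (hx : 0 < x) :
    Real.pi * mittagLefflerReal a β (-x) = K 0 (ph a β x) := by
  obtain ⟨c, hc0, hc⟩ : ∃ c : ℝ, 0 ≤ c ∧ x < Real.exp (a * c) := by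
    refine ⟨x / a, by positivity, ?_⟩
    rw [mul_div_cancel₀ _ ha0.ne']
    have := Real.add_one_le_exp x
    linarith
  set q : ℝ := x * Real.exp (-(a * c)) with hq
  have hq0 : 0 ≤ q := by positivity
  have hq1 : q < 1 := by
    rw [hq, Real.exp_neg, ← div_eq_mul_inv, div_lt_one (Real.exp_pos _)]; exact hc
  rw [K_shift hc0 (ph_diff ha0 ha1 hx) (ph_real a β x) (ph_good ha0 ha1 hx).2]
  have hterm : ∀ (n : ℕ) (w : ℂ), (((-x) ^ n : ℝ) : ℂ) * ps (a * n + β) w =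
      ps β w * ((-x : ℂ) * exp (-(a * w))) ^ n := by
    intro n w
    rw [mul_pow, ← Complex.exp_nat_mul]
    have : ps (a * n + β) w = ps β w * exp (n * -(a * w)) := by
      unfold ps
      rw [← Complex.exp_add]; congr 1; push_cast; ring
    rw [this]; push_cast; ring
  have hnorm : ∀ w ∈ D c, ‖(-x : ℂ) * exp (-(a * w))‖ ≤ q := by
    intro w hw
    rw [norm_mul, norm_neg, norm_real, Real.norm_of_nonneg hx.le, norm_exp, hq]
    gcongr
    have := hw.1
    simp only [neg_re, re_ofReal_mul]
    nlinarith
  have hsum : HasSum (fun n : ℕ => (-x) ^ n * K c (ps (a * n + β))) (K c (ph a β x)) := by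
    unfold HasSum
    have : ∀ s : Finset ℕ, ∑ n ∈ s, (-x) ^ n * K c (ps (a * n + β)) =
        K c (fun w => ∑ n ∈ s, (((-x) ^ n : ℝ) : ℂ) * ps (a * n + β) w) := by
      intro s
      rw [(K_sum (f := fun n w => (((-x) ^ n : ℝ) : ℂ) * ps (a * n + β) w)
        (fun n => (good_ps _ c).smul _) s).2]
      simp_rw [K_smul]
    simp_rw [this]
    apply K_tendsto (z := β) (C := (1 - q)⁻¹)
    · filter_upwards with s
      apply Continuous.continuousOn
      exact continuous_finsetSum _ fun n _ => continuous_const.mul (continuous_ps _)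
    · filter_upwards with s w hw
      simp_rw [hterm]
      rw [← Finset.mul_sum, norm_mul, mul_comm]
      gcongr
      refine (norm_sum_le _ _).trans ?_
      rw [← tsum_geometric_of_lt_one hq0 hq1]
      refine le_trans ?_ ((summable_geometric_of_lt_one hq0 hq1).sum_le_tsum s
        (fun n _ => by positivity))
      gcongr with n _
      rw [norm_pow]
      gcongr
      exact hnorm w hw
    · intro w hw
      simp_rw [hterm]
      have hg := (hasSum_geometric_of_norm_lt_one ((hnorm w hw).trans_lt hq1)).mul_left (ps β w)
      have e : (1 - (-x : ℂ) * exp (-(a * w)))⁻¹ = exp (a * w) / (exp (a * w) + x) := by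
        have h1 := denom_ne ha0 ha1 hx hw
        have h2 := Complex.exp_ne_zero (a * w)
        rw [Complex.exp_neg]
        field_simp
        simp [h1]
      rw [e] at hg
      exact hg
  rw [← hsum.tsum_eq, mittagLefflerReal, ← tsum_mul_left]
  congr 1
  ext n
  rw [hankel]
  ring

lemma ml_asymp {a : ℝ} (β : ℝ) (ha0 : 0 < a) (ha1 : a < 1) :
    Tendsto (fun x => x * mittagLefflerReal a β (-x)) atTop (𝓝 (Real.Gamma (β - a))⁻¹) := by
  have hc := cos_pos ha0 ha1
  have h : Tendsto (fun x : ℝ => K 0 (fun w => (x : ℂ) * ph a β x w)) atTop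
      (𝓝 (K 0 (ps (β - a)))) := by
    have hps : ∀ w, ps (β - a) w = ps β w * exp (a * w) := by
      intro w
      unfold ps
      rw [← Complex.exp_add]; congr 1; push_cast; ring
    apply K_tendsto (z := β - a) (C := (Real.cos (a * Real.pi / 2))⁻¹)
    · filter_upwards [eventually_gt_atTop 0] with x hx
      exact continuousOn_const.mul (ph_diff ha0 ha1 hx).continuousOn
    · filter_upwards [eventually_gt_atTop 0] with x hx w hw
      have hb := denom_bound ha0 ha1 hx hw
      have hpos := norm_pos_iff.mpr (denom_ne ha0 ha1 hx hw)
      have e : (x : ℂ) * ph a β x w = (x / (exp (a * w) + x)) * ps (β - a) w := by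
        rw [hps]; unfold ph; ring
      rw [e, norm_mul]
      gcongr
      rw [norm_div, norm_real, Real.norm_of_nonneg hx.le, div_le_iff₀ hpos, inv_mul_eq_div,
        le_div_iff₀ hc]
      refine le_trans ?_ hb
      have := Real.exp_pos (a * w.re)
      gcongr
      linarith
    · intro w hw
      have e : (fun x : ℝ => ps (β - a) w * (1 + exp (a * w) * ((x⁻¹ : ℝ) : ℂ))⁻¹) =ᶠ[atTop]
          fun x : ℝ => (x : ℂ) * ph a β x w := by
        filter_upwards [eventually_gt_atTop 0] with x hx
        rw [hps]; unfold ph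
        have h1 := denom_ne ha0 ha1 hx hw
        have h3 : (x : ℂ) ≠ 0 := by exact_mod_cast hx.ne'
        have h2 : (1 + exp (a * w) * ((x⁻¹ : ℝ) : ℂ)) = (exp (a * w) + x) / x := by
          push_cast; field_simp; ring
        rw [h2, inv_div]
        ring
      refine Tendsto.congr' e ?_
      have hx : Tendsto (fun x : ℝ => ((x⁻¹ : ℝ) : ℂ)) atTop (𝓝 ((0 : ℝ) : ℂ)) :=
        (Complex.continuous_ofReal.tendsto _).comp tendsto_inv_atTop_zero
      have := (((hx.const_mul (exp (a * w))).const_add 1).inv₀ (by simp)).const_mul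
        (ps (β - a) w)
      simpa using this
  rw [hankel] at h
  have h2 := h.const_mul (Real.pi)⁻¹
  rw [inv_mul_cancel_left₀ Real.pi_ne_zero] at h2
  refine h2.congr' ?_
  filter_upwards [eventually_gt_atTop 0] with x hx
  rw [K_smul, ← ml_eq ha0 ha1 hx]
  have := Real.pi_ne_zero
  field_simp

end MLProof

/-- For `α ∈ (0,1/2)`,
`E_{2α,α}(−x)/E_{2α,1}(−x) → Γ(1−2α)/Γ(−α)` as `x → +∞`, and this limit is negative. -/
theorem mittagLeffler_ratio_limit (α : ℝ) (hα : α ∈ Set.Ioo (0 : ℝ) (1 / 2)) :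
    Filter.Tendsto
        (fun x : ℝ =>
          mittagLefflerReal (2 * α) α (-x) / mittagLefflerReal (2 * α) 1 (-x))
        Filter.atTop (nhds (Real.Gamma (1 - 2 * α) / Real.Gamma (-α))) ∧
      Real.Gamma (1 - 2 * α) / Real.Gamma (-α) < 0 := by
  obtain ⟨h0, h1⟩ := hα
  have hG1 : 0 < Real.Gamma (1 - 2 * α) := Real.Gamma_pos_of_pos (by linarith)
  constructor
  · have hA := MLProof.ml_asymp α (a := 2 * α) (by linarith) (by linarith)
    have hB := MLProof.ml_asymp 1 (a := 2 * α) (by linarith) (by linarith)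
    have h := hA.div hB (inv_ne_zero hG1.ne')
    have e : (Real.Gamma (α - 2 * α))⁻¹ / (Real.Gamma (1 - 2 * α))⁻¹ =
        Real.Gamma (1 - 2 * α) / Real.Gamma (-α) := by
      rw [show α - 2 * α = -α by ring, div_inv_eq_mul, mul_comm, div_eq_mul_inv]
    rw [e] at h
    refine h.congr' ?_
    filter_upwards [Filter.eventually_gt_atTop 0] with x hx
    exact mul_div_mul_left _ _ hx.ne'
  · apply div_neg_of_pos_of_neg hG1
    have h2 : Real.Gamma (-α + 1) = -α * Real.Gamma (-α) := Real.Gamma_add_one (by linarith)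
    have h3 : 0 < Real.Gamma (-α + 1) := Real.Gamma_pos_of_pos (by linarith)
    by_contra hcon
    push Not at hcon
    nlinarith
end
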